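/- Let T be a triangulation of S with vertex set V = ⋃ᵢ σᵢ(V₀), and let l, l' ∈ ℝ^{E(T)}_Δ. Suppose there exists a homeomorphism f : S → S with f(V) = V whose restriction to S ∖ V is isotopic to the identity of S ∖ V (i.e. there is a continuous map F : [0,1] × (S ∖ V) → S ∖ V with F(0,·) = f|_{S∖V}, F(1,·) = id_{S∖V}, and F(t,·) a homeomorphism of S ∖ V for each t ∈ [0,1]), such that d_T[l'](x,y) = d_T[l](f(x), f(y)) for all x, y ∈ S. Then l = l'. In other words, the map l ↦ [d_T[l]] from ℝ^{E(T)}_Δ to the Teichmüller space of polyhedral metrics on (S,V) is injective. -/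

import Mathlib

noncomputable section

open Set
open scoped ENNReal

/-- The Euclidean plane `ℝ²` with the Euclidean metric. -/
abbrev E2 : Type := EuclideanSpace ℝ (Fin 2)

/-- Vertices of the fixed closed regular (equilateral) triangle of side length 1. -/
def p0 : E2 := !₂[0, 0]
def p1 : E2 := !₂[1, 0]
def p2 : E2 := !₂[1 / 2, Real.sqrt 3 / 2]

/-- `Dtri` is the fixed closed regular triangle in `ℝ²` with edge length 1. -/
def Dtri : Set E2 := convexHull ℝ {p0, p1, p2}

/-- `V0` is the set of the three vertices of `Dtri`. -/
def V0 : Set E2 := {p0, p1, p2}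

/-- The three closed edges of `Dtri`. -/
def e01 : Set E2 := segment ℝ p0 p1
def e12 : Set E2 := segment ℝ p1 p2
def e02 : Set E2 := segment ℝ p0 p2

/-- `E0` is the set of the three closed edges of `Dtri`. -/
def E0 : Set (Set E2) := {e01, e12, e02}

/-- The open edge `e° = e ∖ V₀`. -/
def eo (e : Set E2) : Set E2 := e \ V0

/-- `Do = D°` is the interior of `Dtri` in `ℝ²`. -/
def Do : Set E2 := interior Dtri

/-- `l : E₀ → ℝ` is positive and satisfies the strict triangle inequalities:
`l e₁ + l e₂ > l e₃` whenever `{e₁, e₂, e₃} = E₀`. -/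
def TriIneq (l : Set E2 → ℝ) : Prop :=
  (∀ e ∈ E0, 0 < l e) ∧
  ∀ e₁ e₂ e₃ : Set E2, ({e₁, e₂, e₃} : Set (Set E2)) = E0 → l e₁ + l e₂ > l e₃

/-- A linear map `f : ℝ² → ℝ²` realizes the edge lengths `l`, i.e. for each `e ∈ E₀`
the segment `f(e)` has Euclidean length `l e`. -/
def Realizes (f : E2 →ₗ[ℝ] E2) (l : Set E2 → ℝ) : Prop :=
  dist (f p0) (f p1) = l e01 ∧ dist (f p1) (f p2) = l e12 ∧ dist (f p0) (f p2) = l e02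

/-- The metric `d[l]` on `Dtri`, defined by `d[l](x,y) = |f x - f y|₂` for a linear map `f`
realizing the edge lengths `l` (this is independent of the choice of `f`). -/
def dD (l : Set E2 → ℝ) (x y : E2) : ℝ :=
  letI := Classical.propDecidable (∃ f : E2 →ₗ[ℝ] E2, Realizes f l)
  if h : ∃ f : E2 →ₗ[ℝ] E2, Realizes f l then dist (h.choose x) (h.choose y) else 0

/-- A triangulation `T = (σᵢ)_{i ∈ I}`, `I = Fin n`, of a topological space `S`:
a finite family of continuous maps `σᵢ : Dtri → S` such that
(a) `σᵢ` is injective on each open edge, (b) `σᵢ` is injective on `D°`,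
(c) `S` is the disjoint union of `⋃ᵢ σᵢ(V₀)`, the sets `σᵢ(D°)`, and the distinct sets
among the `σᵢ(e°)`, and (d) glued edges are identified by a linear homeomorphism. -/
structure Triangulation (S : Type) [TopologicalSpace S] (n : ℕ) where
  σ : Fin n → E2 → S
  continuousOn : ∀ i, ContinuousOn (σ i) Dtri
  inj_edge : ∀ i, ∀ e ∈ E0, InjOn (σ i) (eo e)
  inj_int : ∀ i, InjOn (σ i) Do
  cover : (⋃ i, σ i '' V0) ∪ (⋃ i, σ i '' Do) ∪ (⋃ i, ⋃ e ∈ E0, σ i '' eo e) = univ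
  disj_int : ∀ i j, i ≠ j → Disjoint (σ i '' Do) (σ j '' Do)
  disj_vert_int : ∀ j, Disjoint (⋃ i, σ i '' V0) (σ j '' Do)
  disj_vert_edge : ∀ j, ∀ e ∈ E0, Disjoint (⋃ i, σ i '' V0) (σ j '' eo e)
  disj_int_edge : ∀ i j, ∀ e ∈ E0, Disjoint (σ i '' Do) (σ j '' eo e)
  edge_eq_or_disjoint : ∀ i j, ∀ e ∈ E0, ∀ e' ∈ E0,
    σ i '' eo e = σ j '' eo e' ∨ Disjoint (σ i '' eo e) (σ j '' eo e')
  glue : ∀ i j, ∀ e ∈ E0, ∀ e' ∈ E0, σ i '' eo e = σ j '' eo e' →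
    ∃ A : E2 →ᵃ[ℝ] E2, A '' e = e' ∧ ∀ x ∈ e, σ j (A x) = σ i x

variable {S : Type} [TopologicalSpace S] {n : ℕ}

/-- `l ∈ ℝ^{E(T)}_Δ`: `l` assigns positive lengths to the edges of `T` satisfying the
strict triangle inequalities in each triangle. -/
def TriIneqT (T : Triangulation S n) (l : Set S → ℝ) : Prop :=
  (∀ (i : Fin n), ∀ e ∈ E0, 0 < l (T.σ i '' e)) ∧
  ∀ (i : Fin n), ∀ e₁ e₂ e₃ : Set E2, ({e₁, e₂, e₃} : Set (Set E2)) = E0 →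
    l (T.σ i '' e₁) + l (T.σ i '' e₂) > l (T.σ i '' e₃)

/-- The restricted edge lengths `l^{(i)}` on the triangle `σᵢ(D)`: `l^{(i)}_e = l_{σᵢ(e)}`. -/
def lRes (T : Triangulation S n) (l : Set S → ℝ) (i : Fin n) : Set E2 → ℝ :=
  fun e => l (T.σ i '' e)

/-- `dᵢ(x,y) = min { d[l^{(i)}](x',y') : x' ∈ σᵢ⁻¹(x), y' ∈ σᵢ⁻¹(y) }` for `x, y ∈ σᵢ(D)`. -/
def dTri (T : Triangulation S n) (l : Set S → ℝ) (i : Fin n) (x y : S) : ℝ :=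
  sInf { r | ∃ x' ∈ Dtri, ∃ y' ∈ Dtri,
    T.σ i x' = x ∧ T.σ i y' = y ∧ r = dD (lRes T l i) x' y' }

/-- The set of sums `Σ_j d_{i_j}(x_{j-1}, x_j)` over chains from `x` to `y`. -/
def chainSums (T : Triangulation S n) (l : Set S → ℝ) (x y : S) : Set ℝ :=
  { r | ∃ (k : ℕ) (c : ℕ → S) (idx : ℕ → Fin n),
      c 0 = x ∧ c k = y ∧
      (∀ j < k, c j ∈ T.σ (idx j) '' Dtri ∧ c (j + 1) ∈ T.σ (idx j) '' Dtri) ∧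
      r = ∑ j ∈ Finset.range k, dTri T l (idx j) (c j) (c (j + 1)) }

/-- The glued metric `d[l]` on `S`. -/
def dGlue (T : Triangulation S n) (l : Set S → ℝ) (x y : S) : ℝ :=
  sInf (chainSums T l x y)

open Filter Topology in
lemma cech_aux {X ι G : Type} [TopologicalSpace X] [SimplyConnectedSpace X]
    [LocallyPathConnectedSpace X] [Group G] (U : ι → Set X) (hU : ∀ u, IsOpen (U u))
    (hcov : ∀ x, ∃ u, x ∈ U u) (h : ι → X → G)
    (hloc : ∀ u v x, x ∈ U u → x ∈ U v →
      ∀ᶠ y in 𝓝 x, (h u y)⁻¹ * h v y = (h u x)⁻¹ * h v x) :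
    ∃ k : X → G, ∀ u, ∀ x ∈ U u, ∀ᶠ y in 𝓝 x, k y * h u y = k x * h u x := by
  let : TopologicalSpace G := ⊥
  have : DiscreteTopology G := ⟨rfl⟩
  choose idx hidx using hcov
  let Z : FiberBundleCore ι X G :=
    { baseSet := U
      isOpen_baseSet := hU
      indexAt := idx
      mem_baseSet_at := hidx
      coordChange := fun u v x g => g * ((h u x)⁻¹ * h v x)
      coordChange_self := by intro u x _ g; simp
      continuousOn_coordChange := by
        intro u v p hp
        apply ContinuousAt.continuousWithinAt
        obtain ⟨⟨h1, h2⟩, -⟩ := hp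
        have e1 := hloc u v p.1 h1 h2
        have e2 : ∀ᶠ q : X × G in 𝓝 p, q.2 = p.2 := by
          have : Tendsto (fun q : X × G => q.2) (𝓝 p) (𝓝 p.2) := continuous_snd.continuousAt
          rw [nhds_discrete G] at this
          exact tendsto_pure.1 this
        have e3 : ∀ᶠ q : X × G in 𝓝 p, (h u q.1)⁻¹ * h v q.1 = (h u p.1)⁻¹ * h v p.1 :=
          continuous_fst.continuousAt.eventually e1
        refine (continuousAt_const (y := p.2 * ((h u p.1)⁻¹ * h v p.1))).congr ?_
        filter_upwards [e2, e3] with q h2 h3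
        rw [h2, h3]
      coordChange_comp := by intro u v w x _ g; simp [mul_assoc] }
  have cov : IsCoveringMap (Bundle.TotalSpace.proj (F := G) (E := Z.Fiber)) :=
    IsFiberBundle.isCoveringMap (F := G) fun x => ⟨Z.localTriv (idx x), hidx x⟩
  obtain ⟨x0⟩ : Nonempty X := inferInstance
  obtain ⟨s, ⟨-, hs⟩, -⟩ := cov.existsUnique_continuousMap_lifts (ContinuousMap.id X) x0
    (⟨x0, (1 : G)⟩ : Bundle.TotalSpace G Z.Fiber) rfl
  have hs' : ∀ x, (s x).proj = x := fun x => congrFun hs x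
  have hval : ∀ x, ∀ u, (Z.localTriv u (s x)).2 =
      (show G from (s x).2) * ((h (idx x) x)⁻¹ * h u x) := by
    intro x u
    have : (Z.localTriv u (s x)).2 =
      (show G from (s x).2) * ((h (idx (s x).proj) (s x).proj)⁻¹ * h u (s x).proj) := rfl
    rw [this, hs']
  refine ⟨fun x => (show G from (s x).2) * (h (idx x) x)⁻¹, fun u x hx => ?_⟩
  have hc : ContinuousAt (fun y => (Z.localTriv u (s y)).2) x := by
    have h1 : ContinuousAt (Z.localTriv u) (s x) := by
      apply (Z.localTriv u).continuousAt
      rw [Z.mem_localTriv_source, hs']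
      exact hx
    exact (continuous_snd.continuousAt.comp (h1.comp s.continuous.continuousAt))
  have h2 : ∀ᶠ y in 𝓝 x, (Z.localTriv u (s y)).2 = (Z.localTriv u (s x)).2 := by
    have : Tendsto (fun y => (Z.localTriv u (s y)).2) (𝓝 x) (𝓝 (Z.localTriv u (s x)).2) := hc
    rw [nhds_discrete G] at this
    exact tendsto_pure.1 this
  filter_upwards [h2] with y hy
  rw [hval, hval] at hy
  exact (mul_assoc (G := G) _ _ _).trans (hy.trans (mul_assoc (G := G) _ _ _).symm)

/-- The corners of the triangle, indexed by `Fin 3`. -/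
def crn : Fin 3 → E2 := ![p0, p1, p2]

/-- The sides of the triangle; `side k` is opposite to `crn k`. -/
def side : Fin 3 → Set E2 := ![e12, e02, e01]

lemma crn_affineIndependent : AffineIndependent ℝ crn := by
  rw [affineIndependent_iff_linearIndependent_vsub ℝ _ (0 : Fin 3)]
  let ee : Fin 2 ≃ {x : Fin 3 // x ≠ 0} := finSuccAboveEquiv 0
  rw [← linearIndependent_equiv ee]
  have : ((fun i : {x : Fin 3 // x ≠ 0} => crn i -ᵥ crn 0) ∘ ee) = ![p1, p2] := by
    funext i
    fin_cases i
    · ext j; fin_cases j <;> simp [ee, crn, p0, p1, p2, finSuccAboveEquiv_apply]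
    · ext j; fin_cases j <;> simp [ee, crn, p0, p1, p2, finSuccAboveEquiv_apply]
  rw [this, LinearIndependent.pair_iff]
  intro s t h
  have h0 := congrArg (fun v : E2 => v 0) h
  have h1 := congrArg (fun v : E2 => v 1) h
  simp [p1, p2] at h0 h1
  subst h1
  simpa using h0

lemma crn_span : affineSpan ℝ (range crn) = ⊤ := by
  rw [crn_affineIndependent.affineSpan_eq_top_iff_card_eq_finrank_add_one]
  simp

/-- The affine basis of corners. -/
def bt : AffineBasis (Fin 3) ℝ E2 := ⟨crn, crn_affineIndependent, crn_span⟩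

/-- Barycentric coordinates. -/
def lam (c : Fin 3) : E2 →ᵃ[ℝ] ℝ := bt.coord c

lemma lam_crn (c d : Fin 3) : lam c (crn d) = if c = d then 1 else 0 :=
  bt.coord_apply c d

lemma lam_sum (x : E2) : lam 0 x + lam 1 x + lam 2 x = 1 := by
  have := bt.sum_coord_apply_eq_one x
  rw [Fin.sum_univ_three] at this
  exact this

lemma lam_comb (x : E2) : x = lam 0 x • crn 0 + lam 1 x • crn 1 + lam 2 x • crn 2 := by
  have := bt.linear_combination_coord_eq_self x
  rw [Fin.sum_univ_three] at this
  exact this.symm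

lemma lam_ext {x y : E2} (h : ∀ c, lam c x = lam c y) : x = y := by
  rw [lam_comb x, lam_comb y, h, h, h]

lemma lam_cont (c : Fin 3) : Continuous (lam c) := (lam c).continuous_of_finiteDimensional

lemma range_crn : range crn = V0 := by
  ext x
  simp [crn, V0]
  tauto

lemma mem_Dtri {x : E2} : x ∈ Dtri ↔ ∀ c, 0 ≤ lam c x := by
  have := bt.convexHull_eq_nonneg_coord
  have h2 : Dtri = convexHull ℝ (range bt) := by
    show convexHull ℝ V0 = convexHull ℝ (range crn)
    rw [range_crn]
  rw [h2, this]; rfl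

lemma mem_Do {x : E2} : x ∈ Do ↔ ∀ c, 0 < lam c x := by
  have := bt.interior_convexHull
  have h2 : Do = interior (convexHull ℝ (range bt)) := by
    show interior (convexHull ℝ V0) = interior (convexHull ℝ (range crn))
    rw [range_crn]
  rw [h2, this]; rfl

lemma mem_V0 {x : E2} : x ∈ V0 ↔ ∃ c, x = crn c := by
  rw [← range_crn]; simp [eq_comm]

lemma isCompact_Dtri : IsCompact Dtri := by
  have : (V0 : Set E2).Finite := by simp [V0]
  exact this.isCompact_convexHull ℝ

lemma side_eq (k : Fin 3) : side k = segment ℝ (crn (k + 1)) (crn (k + 2)) := by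
  fin_cases k
  · rfl
  · exact segment_symm ℝ _ _
  · rfl

lemma E0_eq : E0 = range side := by
  ext e
  simp only [E0, side, mem_insert_iff, mem_singleton_iff, mem_range, Fin.exists_fin_succ]
  simp [eq_comm]
  tauto

lemma side_mem_E0 (k : Fin 3) : side k ∈ E0 := by rw [E0_eq]; exact mem_range_self k

lemma mem_side {k : Fin 3} {x : E2} : x ∈ side k ↔ x ∈ Dtri ∧ lam k x = 0 := by
  rw [side_eq, mem_Dtri]
  constructor
  · rw [segment_eq_image_lineMap]
    rintro ⟨t, ⟨h0, h1⟩, rfl⟩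
    refine ⟨fun c => ?_, ?_⟩
    · rw [AffineMap.apply_lineMap, lam_crn, lam_crn, AffineMap.lineMap_apply]
      fin_cases k <;> fin_cases c <;> simp <;> linarith
    · rw [AffineMap.apply_lineMap, lam_crn, lam_crn, AffineMap.lineMap_apply]
      fin_cases k <;> simp
  · rintro ⟨h, hk⟩
    have hs := lam_sum x
    refine ⟨lam (k+1) x, lam (k+2) x, h _, h _, ?_, ?_⟩
    · fin_cases k <;> simp at hk ⊢ <;> linarith
    · conv_rhs => rw [lam_comb x]
      fin_cases k <;> simp at hk ⊢ <;> simp [hk, add_comm]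

lemma crn_mem_Dtri (c : Fin 3) : crn c ∈ Dtri := by
  rw [mem_Dtri]; intro d; rw [lam_crn]; split_ifs <;> norm_num

lemma crn_inj {c d : Fin 3} (h : crn c = crn d) : c = d := by
  by_contra hne
  have := lam_crn c d
  rw [← h, lam_crn] at this
  simp [hne] at this

lemma eq_crn_of_lam {x : E2} (hx : x ∈ Dtri) {c : Fin 3} (h : lam c x = 1) : x = crn c := by
  rw [mem_Dtri] at hx
  have hs := lam_sum x
  have h0 := hx 0
  have h1 := hx 1
  have h2 := hx 2
  apply lam_ext
  intro d
  rw [lam_crn]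
  fin_cases c <;> fin_cases d <;> simp at h ⊢ <;> linarith

lemma mem_eo {k : Fin 3} {x : E2} :
    x ∈ eo (side k) ↔ lam k x = 0 ∧ ∀ c, c ≠ k → 0 < lam c x := by
  constructor
  · rintro ⟨h1, h2⟩
    rw [mem_side] at h1
    refine ⟨h1.2, fun c hc => lt_of_le_of_ne (mem_Dtri.1 h1.1 c) fun h0 => h2 ?_⟩
    have hs := lam_sum x
    have hk := h1.2
    rw [mem_V0]
    have : ∃ d, lam d x = 1 := by
      fin_cases k <;> fin_cases c <;> simp at hc hk h0 <;>
      first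
        | exact ⟨0, by linarith⟩
        | exact ⟨1, by linarith⟩
        | exact ⟨2, by linarith⟩
    obtain ⟨d, hd⟩ := this
    exact ⟨d, eq_crn_of_lam h1.1 hd⟩
  · rintro ⟨h1, h2⟩
    refine ⟨mem_side.2 ⟨mem_Dtri.2 fun c => ?_, h1⟩, fun hV => ?_⟩
    · by_cases hc : c = k
      · rw [hc, h1]
      · exact (h2 c hc).le
    · obtain ⟨d, rfl⟩ := mem_V0.1 hV
      simp only [lam_crn] at h1 h2
      have h3 := h2 (k+1) (by fin_cases k <;> simp)
      have h4 := h2 (k+2) (by fin_cases k <;> simp)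
      fin_cases k <;> fin_cases d <;> simp at h1 h3 h4

lemma Dtri_cases {x : E2} (hx : x ∈ Dtri) :
    x ∈ V0 ∨ x ∈ Do ∨ ∃ k, x ∈ eo (side k) := by
  by_cases hV : x ∈ V0
  · exact Or.inl hV
  by_cases hD : x ∈ Do
  · exact Or.inr (Or.inl hD)
  rw [mem_Do] at hD
  push Not at hD
  obtain ⟨c, hc⟩ := hD
  exact Or.inr (Or.inr ⟨c, mem_side.2 ⟨hx, le_antisymm hc (mem_Dtri.1 hx c)⟩, hV⟩)

lemma lam_half {x : E2} (hx : x ∈ Dtri) {c d : Fin 3} (hc : 1 / 2 < lam c x)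
    (hd : 1 / 2 < lam d x) : c = d := by
  rw [mem_Dtri] at hx
  have hs := lam_sum x
  have h0 := hx 0
  have h1 := hx 1
  have h2 := hx 2
  by_contra hne
  fin_cases c <;> fin_cases d <;> simp at hc hd hne <;> linarith

/-- An affine map carrying a side onto a side maps corners to corners. -/
lemma affine_side {A : E2 →ᵃ[ℝ] E2} {k k' : Fin 3} (hA : A '' side k = side k') :
    (A (crn (k+1)) = crn (k'+1) ∧ A (crn (k+2)) = crn (k'+2)) ∨
    (A (crn (k+1)) = crn (k'+2) ∧ A (crn (k+2)) = crn (k'+1)) := by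
  have hmem : ∀ x ∈ side k, A x ∈ Dtri := fun x hx => by
    have : A x ∈ side k' := hA ▸ mem_image_of_mem _ hx
    exact (mem_side.1 this).1
  have e1 : crn (k+1) ∈ side k := by rw [side_eq]; exact left_mem_segment ℝ _ _
  have e2 : crn (k+2) ∈ side k := by rw [side_eq]; exact right_mem_segment ℝ _ _
  have key : ∀ d, crn d ∈ side k' → crn d = A (crn (k+1)) ∨ crn d = A (crn (k+2)) := by
    intro d hd
    rw [← hA, side_eq, segment_eq_image_lineMap] at hd
    obtain ⟨_, ⟨t, ⟨h0, h1⟩, rfl⟩, hx⟩ := hd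
    have h3 := congrArg (lam d) hx
    rw [AffineMap.apply_lineMap, AffineMap.apply_lineMap, lam_crn, AffineMap.lineMap_apply] at h3
    simp at h3
    have le1 : ∀ x ∈ Dtri, lam d x ≤ 1 := by
      intro x hx
      rw [mem_Dtri] at hx
      have hs := lam_sum x
      have h0 := hx 0
      have h1 := hx 1
      have h2 := hx 2
      fin_cases d <;> simp <;> linarith
    have u1 := le1 _ (hmem _ e1)
    have u2 := le1 _ (hmem _ e2)
    by_cases hu : lam d (A (crn (k+1))) = 1
    · left; exact (eq_crn_of_lam (hmem _ e1) hu).symm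
    · right
      refine (eq_crn_of_lam (hmem _ e2) ?_).symm
      have hlt := lt_of_le_of_ne u1 hu
      rcases eq_or_lt_of_le h1 with h1 | h1
      · subst h1; linarith
      · nlinarith
  have f1 : crn (k'+1) ∈ side k' := by rw [side_eq]; exact left_mem_segment ℝ _ _
  have f2 : crn (k'+2) ∈ side k' := by rw [side_eq]; exact right_mem_segment ℝ _ _
  have hne : crn (k'+1) ≠ crn (k'+2) := fun h => by
    have := crn_inj h
    fin_cases k' <;> simp at this
  rcases key _ f1 with h1 | h1 <;> rcases key _ f2 with h2 | h2
  · exact absurd (h1.trans h2.symm) hne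
  · exact Or.inl ⟨h1.symm, h2.symm⟩
  · exact Or.inr ⟨h2.symm, h1.symm⟩
  · exact absurd (h1.trans h2.symm) hne

lemma triIneq_sides {L : Set E2 → ℝ} (h : TriIneq L) :
    (0 < L e01 ∧ 0 < L e12 ∧ 0 < L e02) ∧ L e01 + L e12 > L e02 ∧ L e12 + L e02 > L e01 ∧
    L e01 + L e02 > L e12 := by
  obtain ⟨h1, h2⟩ := h
  refine ⟨⟨h1 _ (by simp [E0]), h1 _ (by simp [E0]), h1 _ (by simp [E0])⟩,
    h2 _ _ _ rfl, h2 _ _ _ ?_, h2 _ _ _ ?_⟩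
  · ext x; simp only [E0, mem_insert_iff, mem_singleton_iff]; tauto
  · ext x; simp only [E0, mem_insert_iff, mem_singleton_iff]; tauto

lemma p0_zero : p0 = 0 := by
  ext j; fin_cases j <;> simp [p0]

lemma exists_realizes {L : Set E2 → ℝ} (h : TriIneq L) : ∃ f : E2 →ₗ[ℝ] E2, Realizes f L := by
  obtain ⟨⟨ha, hb, hc⟩, h1, h2, h3⟩ := triIneq_sides h
  unfold Realizes
  generalize L e01 = a at *
  generalize L e12 = b at *
  generalize L e02 = c at *
  have hs3 : Real.sqrt 3 ≠ 0 := by positivity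
  set X : ℝ := (a ^ 2 + c ^ 2 - b ^ 2) / (2 * a) with hX
  have hXa : 2 * a * X = a ^ 2 + c ^ 2 - b ^ 2 := by rw [hX]; field_simp
  have hY0 : 0 ≤ c ^ 2 - X ^ 2 := by
    have e : 4 * a ^ 2 * (c ^ 2 - X ^ 2) =
        ((a + c) ^ 2 - b ^ 2) * (b ^ 2 - (a - c) ^ 2) := by
      have : 4 * a ^ 2 * (c ^ 2 - X ^ 2) = 4 * a ^ 2 * c ^ 2 - (2 * a * X) ^ 2 := by ring
      rw [this, hXa]; ring
    have e1 : 0 ≤ (a + c) ^ 2 - b ^ 2 := by nlinarith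
    have e2 : 0 ≤ b ^ 2 - (a - c) ^ 2 := by nlinarith
    have e3 := mul_nonneg e1 e2
    rw [← e] at e3
    exact nonneg_of_mul_nonneg_right e3 (by positivity)
  set Y : ℝ := Real.sqrt (c ^ 2 - X ^ 2) with hY
  have hYY : Y ^ 2 = c ^ 2 - X ^ 2 := Real.sq_sqrt hY0
  let u : E2 := !₂[a, 0]
  let w : E2 := !₂[X, Y]
  let f : E2 →ₗ[ℝ] E2 :=
    { toFun := fun x => (x 0 - x 1 / Real.sqrt 3) • u + (2 * x 1 / Real.sqrt 3) • w
      map_add' := by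
        intro x y
        simp only [PiLp.add_apply]
        module
      map_smul' := by
        intro r x
        simp only [PiLp.smul_apply, smul_eq_mul, RingHom.id_apply]
        module }
  have f0 : f p0 = 0 := by rw [p0_zero, map_zero]
  have f1 : f p1 = u := by
    show (p1 0 - p1 1 / Real.sqrt 3) • u + (2 * p1 1 / Real.sqrt 3) • w = u
    simp [p1]
  have f2 : f p2 = w := by
    show (p2 0 - p2 1 / Real.sqrt 3) • u + (2 * p2 1 / Real.sqrt 3) • w = w
    have e1 : p2 0 - p2 1 / Real.sqrt 3 = 0 := by
      simp only [p2]; simp; field_simp; norm_num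
    have e2 : 2 * p2 1 / Real.sqrt 3 = 1 := by
      simp only [p2]; simp; field_simp
    rw [e1, e2]; simp
  refine ⟨f, ?_, ?_, ?_⟩
  · rw [f0, f1, dist_zero_left, EuclideanSpace.norm_eq]
    simp [u, Real.sqrt_sq_eq_abs, abs_of_pos ha]
  · rw [f1, f2, EuclideanSpace.dist_eq, Real.sqrt_eq_iff_mul_self_eq (by positivity) hb.le]
    simp [u, w, Real.dist_eq, sq_abs]
    nlinarith
  · rw [f0, f2, dist_zero_left, EuclideanSpace.norm_eq,
      Real.sqrt_eq_iff_mul_self_eq (by positivity) hc.le]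
    simp [w, sq_abs]
    nlinarith

/-- The chosen linear realization of edge lengths. -/
def rl (L : Set E2 → ℝ) : E2 →ₗ[ℝ] E2 :=
  letI := Classical.propDecidable (∃ f : E2 →ₗ[ℝ] E2, Realizes f L)
  if h : ∃ f : E2 →ₗ[ℝ] E2, Realizes f L then h.choose else 0

lemma dD_eq (L : Set E2 → ℝ) (x y : E2) : dD L x y = dist (rl L x) (rl L y) := by
  unfold dD rl
  split_ifs with h
  · rfl
  · simp

lemma rl_realizes {L : Set E2 → ℝ} (h : TriIneq L) : Realizes (rl L) L := by
  unfold rl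
  rw [dif_pos (exists_realizes h)]
  exact (exists_realizes h).choose_spec

lemma rl_side {L : Set E2 → ℝ} (h : TriIneq L) (k : Fin 3) :
    dist (rl L (crn (k+1))) (rl L (crn (k+2))) = L (side k) := by
  obtain ⟨h1, h2, h3⟩ := rl_realizes h
  fin_cases k
  · exact h2
  · exact (dist_comm _ _).trans h3
  · exact h1

lemma rl_inj {L : Set E2 → ℝ} (h : TriIneq L) : Function.Injective (rl L) := by
  obtain ⟨⟨ha, hb, hc⟩, t1, t2, t3⟩ := triIneq_sides h
  obtain ⟨h1, h2, h3⟩ := rl_realizes h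
  rw [← LinearMap.ker_eq_bot, LinearMap.ker_eq_bot']
  intro z hz
  rw [p0_zero, map_zero] at h1 h3
  rw [dist_zero_left] at h1 h3
  rw [dist_eq_norm] at h2
  have hz' : z = lam 1 z • p1 + lam 2 z • p2 := by
    have := lam_comb z
    simpa [crn, p0_zero] using this
  rw [hz', map_add, map_smul, map_smul] at hz
  generalize rl L p1 = u at *
  generalize rl L p2 = w at *
  have main : ∀ t : ℝ, u ≠ t • w := by
    rintro t rfl
    have e1 : ‖t • w - w‖ = |t - 1| * ‖w‖ := by
      rw [← Real.norm_eq_abs, ← norm_smul, sub_smul, one_smul]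
    rw [norm_smul, Real.norm_eq_abs] at h1
    rw [e1] at h2
    rw [← h1, ← h2, ← h3] at t1 t2 t3
    rw [← h3] at hc
    rcases abs_cases t with ⟨q1, q2⟩ | ⟨q1, q2⟩ <;> rcases abs_cases (t - 1) with ⟨q3, q4⟩ | ⟨q3, q4⟩ <;>
      rw [q1, q3] at t1 t2 t3 <;> nlinarith
  have a0 : lam 1 z = 0 := by
    by_contra hne
    apply main (-(lam 2 z / lam 1 z))
    have : u = (lam 1 z)⁻¹ • (lam 1 z • u) := by rw [smul_smul, inv_mul_cancel₀ hne, one_smul]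
    rw [this, eq_neg_of_add_eq_zero_left hz, smul_neg, smul_smul, neg_smul]
    congr 2
    field_simp
  have b0 : lam 2 z = 0 := by
    rw [a0, zero_smul, zero_add] at hz
    rcases smul_eq_zero.1 hz with h | h
    · exact h
    · rw [h, norm_zero] at h3; linarith
  rw [hz', a0, b0]; simp

/-- A plane isometry carrying a pair of points to a pair at the same distance. -/
lemma exists_isometry (a b a' b' : E2) (h : dist a b = dist a' b') :
    ∃ τ : E2 ≃ᵢ E2, τ a = a' ∧ τ b = b' := by
  have hn : ‖b - a‖ = ‖b' - a'‖ := by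
    rw [← dist_eq_norm, ← dist_eq_norm, dist_comm, h, dist_comm]
  let ρ := Submodule.reflection (ℝ ∙ ((b - a) - (b' - a')))ᗮ
  have hρ : ρ (b - a) = b' - a' := Submodule.reflection_sub hn
  refine ⟨((IsometryEquiv.addRight (-a)).trans ρ.toIsometryEquiv).trans
    (IsometryEquiv.addRight a'), ?_, ?_⟩
  · simp
  · have : ρ (b + -a) = b' - a' := by rw [← sub_eq_add_neg]; exact hρ
    simp [this]

/-- The vertex set of a triangulation. -/
def TV (T : Triangulation S n) : Set S := ⋃ i, T.σ i '' V0

lemma V0_sub_Dtri : V0 ⊆ Dtri := by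
  intro x hx
  obtain ⟨c, rfl⟩ := mem_V0.1 hx
  exact crn_mem_Dtri c

lemma eo_sub_Dtri (k : Fin 3) : eo (side k) ⊆ Dtri := fun _ hx => (mem_side.1 hx.1).1

lemma mem_TV_iff (T : Triangulation S n) {j : Fin n} {b : E2} (hb : b ∈ Dtri) :
    T.σ j b ∈ TV T ↔ b ∈ V0 := by
  constructor
  · intro h
    rcases Dtri_cases hb with h1 | h1 | ⟨k, h1⟩
    · exact h1
    · exact absurd (mem_image_of_mem _ h1) (disjoint_left.1 (T.disj_vert_int j) h)
    · exact absurd (mem_image_of_mem _ h1)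
        (disjoint_left.1 (T.disj_vert_edge j _ (side_mem_E0 k)) h)
  · intro h
    exact mem_iUnion.2 ⟨j, mem_image_of_mem _ h⟩

lemma exists_rep (T : Triangulation S n) (x : S) : ∃ j, ∃ b ∈ Dtri, T.σ j b = x := by
  have : x ∈ (univ : Set S) := mem_univ x
  rw [← T.cover] at this
  rcases this with (h | h) | h
  · obtain ⟨j, b, hb, h⟩ := mem_iUnion.1 h
    exact ⟨j, b, V0_sub_Dtri hb, h⟩
  · obtain ⟨j, b, hb, h⟩ := mem_iUnion.1 h
    exact ⟨j, b, interior_subset hb, h⟩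
  · obtain ⟨j, h⟩ := mem_iUnion.1 h
    simp only [mem_iUnion] at h
    obtain ⟨e, he, b, hb, h⟩ := h
    rw [E0_eq] at he
    obtain ⟨k, rfl⟩ := he
    exact ⟨j, b, eo_sub_Dtri k hb, h⟩

/-- Two representatives of the same non-vertex point. -/
lemma key_rep (T : Triangulation S n) {i j : Fin n} {a b : E2} (ha : a ∈ Dtri) (hb : b ∈ Dtri)
    (hab : T.σ i a = T.σ j b) (hV : a ∉ V0) :
    (a ∈ Do ∧ i = j ∧ a = b) ∨ ∃ k k', a ∈ eo (side k) ∧ b ∈ eo (side k') ∧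
      T.σ i '' eo (side k) = T.σ j '' eo (side k') := by
  have hbV : b ∉ V0 := fun h => hV ((mem_TV_iff T ha).1 (hab ▸ (mem_TV_iff T hb).2 h))
  rcases Dtri_cases ha with h1 | h1 | ⟨k, h1⟩
  · exact absurd h1 hV
  · rcases Dtri_cases hb with h2 | h2 | ⟨k', h2⟩
    · exact absurd h2 hbV
    · left
      have hij : i = j := by
        by_contra hne
        exact disjoint_left.1 (T.disj_int i j hne) (mem_image_of_mem _ h1)
          (hab ▸ mem_image_of_mem _ h2)
      subst hij
      exact ⟨h1, rfl, T.inj_int i h1 h2 hab⟩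
    · exact absurd (hab ▸ mem_image_of_mem _ h2)
        (disjoint_left.1 (T.disj_int_edge i j _ (side_mem_E0 k')) (mem_image_of_mem _ h1))
  · rcases Dtri_cases hb with h2 | h2 | ⟨k', h2⟩
    · exact absurd h2 hbV
    · exact absurd (hab ▸ mem_image_of_mem _ h1)
        (disjoint_left.1 (T.disj_int_edge j i _ (side_mem_E0 k)) (mem_image_of_mem _ h2))
    · right
      refine ⟨k, k', h1, h2, ?_⟩
      rcases T.edge_eq_or_disjoint i j _ (side_mem_E0 k) _ (side_mem_E0 k') with h | h
      · exact h
      · exact absurd (hab ▸ mem_image_of_mem _ h2) (disjoint_left.1 h (mem_image_of_mem _ h1))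

lemma image_eo (T : Triangulation S n) (j : Fin n) (k : Fin 3) :
    T.σ j '' eo (side k) = (T.σ j '' side k) \ TV T := by
  ext x
  constructor
  · rintro ⟨b, hb, rfl⟩
    exact ⟨mem_image_of_mem _ hb.1, fun h => hb.2 ((mem_TV_iff T (eo_sub_Dtri k hb)).1 h)⟩
  · rintro ⟨⟨b, hb, rfl⟩, h⟩
    exact ⟨b, ⟨hb, fun h' => h ((mem_TV_iff T (mem_side.1 hb).1).2 h')⟩, rfl⟩

lemma image_side_iff (T : Triangulation S n) {i j : Fin n} {k k' : Fin 3} :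
    T.σ i '' eo (side k) = T.σ j '' eo (side k') ↔ T.σ i '' side k = T.σ j '' side k' := by
  constructor
  · intro h
    obtain ⟨A, hA, hA'⟩ := T.glue i j _ (side_mem_E0 k) _ (side_mem_E0 k') h
    rw [← hA, image_image]
    exact (image_congr hA').symm
  · intro h
    rw [image_eo, image_eo, h]

open Filter Topology in
/-- A property holds near `x0` in `S` as soon as it holds near each representative. -/
lemma loc_rep [T2Space S] (T : Triangulation S n) (x0 : S) (Q : S → Prop)
    (h : ∀ j, ∀ b ∈ Dtri, T.σ j b = x0 → ∀ᶠ b' in 𝓝[Dtri] b, Q (T.σ j b')) :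
    ∀ᶠ x in 𝓝 x0, Q x := by
  let O : Fin n → Set E2 := fun j => {b | ∀ᶠ b' in 𝓝 b, b' ∈ Dtri → Q (T.σ j b')}
  have hO : ∀ j, IsOpen (O j) := fun j => isOpen_setOfPred_eventually_nhds
  have hC : ∀ j, IsClosed (T.σ j '' (Dtri \ O j)) := fun j =>
    ((isCompact_Dtri.diff (hO j)).image_of_continuousOn
      ((T.continuousOn j).mono sdiff_subset)).isClosed
  have hx : ∀ j, ∀ᶠ x in 𝓝 x0, x ∉ T.σ j '' (Dtri \ O j) := by
    intro j
    apply (hC j).isOpen_compl.eventually_mem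
    rintro ⟨b, ⟨hb, hb'⟩, hbx⟩
    exact hb' (eventually_nhdsWithin_iff.1 (h j b hb hbx))
  filter_upwards [eventually_all.2 hx] with x hx
  obtain ⟨j, b, hb, rfl⟩ := exists_rep T x
  have : b ∈ O j := by
    by_contra hbO
    exact hx j ⟨b, ⟨hb, hbO⟩, rfl⟩
  exact (show ∀ᶠ b' in 𝓝 b, b' ∈ Dtri → Q (T.σ j b') from this).self_of_nhds hb

/-- The regions of the triangle used for charts. -/
def Rg : Option (Fin 3) → Set E2
  | none => {x | ∀ c, 0 < lam c x}
  | some k => {x | x ∈ Dtri ∧ ∀ c, c ≠ k → lam k x < lam c x}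

lemma Rg_sub (m : Option (Fin 3)) : Rg m ⊆ Dtri := by
  intro x hx
  cases m with
  | none => exact mem_Dtri.2 fun c => (hx c).le
  | some k => exact hx.1

open Filter Topology in
lemma Rg_open {m : Option (Fin 3)} {b : E2} (hb : b ∈ Rg m) :
    ∀ᶠ b' in 𝓝[Dtri] b, b' ∈ Rg m := by
  cases m with
  | none =>
    apply eventually_nhdsWithin_of_eventually_nhds
    have : ∀ c, ∀ᶠ b' in 𝓝 b, 0 < lam c b' := fun c =>
      (lam_cont c).continuousAt.eventually_const_lt (hb c)
    exact eventually_all.2 this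
  | some k =>
    have : ∀ c, ∀ᶠ b' in 𝓝 b, c ≠ k → lam k b' < lam c b' := by
      intro c
      by_cases hc : c = k
      · simp [hc]
      · filter_upwards [(lam_cont k).continuousAt.eventually_lt (lam_cont c).continuousAt
          (hb.2 c hc)] with b' h _
        exact h
    filter_upwards [eventually_nhdsWithin_of_eventually_nhds (eventually_all.2 this),
      self_mem_nhdsWithin] with b' h1 h2
    exact ⟨h2, h1⟩

lemma Rg_notV {m : Option (Fin 3)} {b : E2} (hb : b ∈ Rg m) : b ∉ V0 := by
  intro hV
  obtain ⟨d, rfl⟩ := mem_V0.1 hV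
  cases m with
  | none =>
    have := hb (d+1)
    rw [lam_crn] at this
    fin_cases d <;> simp at this
  | some k =>
    have h1 := hb.2 (k+1) (by fin_cases k <;> simp)
    have h2 := hb.2 (k+2) (by fin_cases k <;> simp)
    simp only [lam_crn] at h1 h2
    fin_cases k <;> fin_cases d <;> simp at h1 h2 <;> linarith

lemma Rg_some_inj {k k' : Fin 3} {b : E2} (h : b ∈ Rg (some k)) (h' : b ∈ Rg (some k')) :
    k = k' := by
  by_contra hne
  have h1 := h.2 k' (Ne.symm hne)
  have h2 := h'.2 k hne
  linarith

lemma Rg_some_eo {k k' : Fin 3} {b : E2} (h : b ∈ Rg (some k)) (h' : b ∈ eo (side k')) :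
    k = k' := by
  by_contra hne
  have h1 := h.2 k' (Ne.symm hne)
  have h2 := (mem_eo.1 h').1
  have h3 := mem_Dtri.1 h.1 k
  linarith

lemma Rg_none_eo {k' : Fin 3} {b : E2} (h : b ∈ Rg none) (h' : b ∈ eo (side k')) : False := by
  have h1 := h k'
  have h2 := (mem_eo.1 h').1
  linarith

lemma eo_Rg {k : Fin 3} {b : E2} (h : b ∈ eo (side k)) : b ∈ Rg (some k) := by
  refine ⟨eo_sub_Dtri k h, fun c hc => ?_⟩
  rw [(mem_eo.1 h).1]
  exact (mem_eo.1 h).2 c hc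

/-- The chart class of a region. -/
def cls (T : Triangulation S n) (j : Fin n) : Option (Fin 3) → Fin n ⊕ Set S
  | none => Sum.inl j
  | some k => Sum.inr (T.σ j '' side k)

def Wc (T : Triangulation S n) (u : Fin n ⊕ Set S) : Set S :=
  {x | ∃ j m, ∃ a ∈ Rg m, cls T j m = u ∧ T.σ j a = x}

/-- Every representative of a point in a chart domain lies in a region of that chart. -/
lemma Wc_rep (T : Triangulation S n) {u : Fin n ⊕ Set S} {j : Fin n} {b : E2} (hb : b ∈ Dtri)
    (h : T.σ j b ∈ Wc T u) : ∃ m, cls T j m = u ∧ b ∈ Rg m := by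
  obtain ⟨i, m, a, ha, hu, hab⟩ := h
  rcases key_rep T (Rg_sub m ha) hb hab (Rg_notV ha) with ⟨h1, h2, h3⟩ | ⟨k, k', h1, h2, h3⟩
  · subst h2; subst h3; exact ⟨m, hu, ha⟩
  · cases m with
    | none => exact (Rg_none_eo ha h1).elim
    | some k1 =>
      obtain rfl := Rg_some_eo ha h1
      refine ⟨some k', ?_, eo_Rg h2⟩
      rw [← hu]
      exact congrArg Sum.inr (image_side_iff T |>.1 h3).symm

/-- The chosen realization of triangle `j`. -/
def fr (T : Triangulation S n) (l : Set S → ℝ) (j : Fin n) : E2 →ₗ[ℝ] E2 := rl (lRes T l j)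

lemma triIneq_res {T : Triangulation S n} {l : Set S → ℝ} (hl : TriIneqT T l) (j : Fin n) :
    TriIneq (lRes T l j) := ⟨fun e he => hl.1 j e he, fun e₁ e₂ e₃ h => hl.2 j e₁ e₂ e₃ h⟩

lemma exists_flag_rep (T : Triangulation S n) (l : Set S → ℝ) (hl : TriIneqT T l)
    (hn : Nonempty (Fin n)) :
    ∃ (τ : Fin n → Fin 3 → (E2 ≃ᵢ E2)) (A : Fin n → Fin 3 → (E2 →ᵃ[ℝ] E2))
      (r : Set S → Fin n) (q : Set S → Fin 3), ∀ j k,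
      A j k '' side k = side (q (T.σ j '' side k)) ∧
      (∀ x ∈ side k, T.σ (r (T.σ j '' side k)) (A j k x) = T.σ j x) ∧
      (∀ x ∈ side k, τ j k (fr T l j x) = fr T l (r (T.σ j '' side k)) (A j k x)) := by
  have h0 : ∀ e : Set S, ∃ p : Fin n × Fin 3, ∀ j k, T.σ j '' side k = e →
      T.σ p.1 '' side p.2 = e := by
    intro e
    by_cases h : ∃ j k, T.σ j '' side k = e
    · obtain ⟨j, k, h⟩ := h
      exact ⟨(j, k), fun _ _ _ => h⟩
    · push Not at h
      exact ⟨(hn.some, 0), fun j k hjk => absurd hjk (h j k)⟩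
  choose p hp using h0
  have h1 : ∀ j k, ∃ (A : E2 →ᵃ[ℝ] E2) (τ : E2 ≃ᵢ E2),
      A '' side k = side (p (T.σ j '' side k)).2 ∧
      (∀ x ∈ side k, T.σ (p (T.σ j '' side k)).1 (A x) = T.σ j x) ∧
      (∀ x ∈ side k, τ (fr T l j x) = fr T l (p (T.σ j '' side k)).1 (A x)) := by
    intro j k
    have hpe := hp _ j k rfl
    generalize p (T.σ j '' side k) = q at *
    obtain ⟨i, k0⟩ := q
    dsimp only at *
    obtain ⟨A, hA, hA'⟩ := T.glue j i _ (side_mem_E0 k) _ (side_mem_E0 k0)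
      ((image_side_iff T).2 hpe.symm)
    have d1 : dist (fr T l j (crn (k+1))) (fr T l j (crn (k+2))) = l (T.σ j '' side k) :=
      rl_side (triIneq_res hl j) k
    have d2 : dist (fr T l i (crn (k0+1))) (fr T l i (crn (k0+2))) = l (T.σ i '' side k0) :=
      rl_side (triIneq_res hl i) k0
    have d3 : dist (fr T l j (crn (k+1))) (fr T l j (crn (k+2))) =
        dist (fr T l i (A (crn (k+1)))) (fr T l i (A (crn (k+2)))) := by
      rw [d1, ← hpe, ← d2]
      rcases affine_side hA with ⟨h1, h2⟩ | ⟨h1, h2⟩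
      · rw [h1, h2]
      · rw [h1, h2, dist_comm]
    obtain ⟨τ, t1, t2⟩ := exists_isometry _ _ _ _ d3
    refine ⟨A, τ, hA, hA', fun x hx => ?_⟩
    rw [side_eq, segment_eq_image_lineMap] at hx
    obtain ⟨t, ht, rfl⟩ := hx
    have e1 : fr T l j (AffineMap.lineMap (crn (k+1)) (crn (k+2)) t) =
        AffineMap.lineMap (fr T l j (crn (k+1))) (fr T l j (crn (k+2))) t :=
      (fr T l j).toAffineMap.apply_lineMap _ _ _
    have e2 : τ (AffineMap.lineMap (fr T l j (crn (k+1))) (fr T l j (crn (k+2))) t) =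
        AffineMap.lineMap (τ (fr T l j (crn (k+1)))) (τ (fr T l j (crn (k+2)))) t :=
      τ.toRealAffineIsometryEquiv.toAffineEquiv.toAffineMap.apply_lineMap _ _ _
    rw [e1, e2, t1, t2, A.apply_lineMap]
    exact ((fr T l i).toAffineMap.apply_lineMap _ _ _).symm
  choose A τ h2 h3 h4 using h1
  exact ⟨τ, A, fun e => (p e).1, fun e => (p e).2, fun j k => ⟨h2 j k, h3 j k, h4 j k⟩⟩

lemma exists_tau (T : Triangulation S n) (l : Set S → ℝ) (hl : TriIneqT T l) :
    ∃ τ : Fin n → Option (Fin 3) → (E2 ≃ᵢ E2), ∀ j m j' m' a b, cls T j m = cls T j' m' →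
      a ∈ Rg m → b ∈ Rg m' → T.σ j a = T.σ j' b →
      τ j m (fr T l j a) = τ j' m' (fr T l j' b) ∧
      ∀ c c', 1 / 2 < lam c a → 1 / 2 < lam c' b →
        τ j m (fr T l j (crn c)) = τ j' m' (fr T l j' (crn c')) := by
  by_cases hn : Nonempty (Fin n)
  swap
  · exact ⟨fun j => (hn ⟨j⟩).elim, fun j => (hn ⟨j⟩).elim⟩
  obtain ⟨τ, A, r, q, H⟩ := exists_flag_rep T l hl hn
  refine ⟨fun j m => m.elim 1 (τ j), ?_⟩
  intro j m j' m' a b hcls ha hb hab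
  rcases key_rep T (Rg_sub m ha) (Rg_sub m' hb) hab (Rg_notV ha) with
    ⟨h1, h2, h3⟩ | ⟨k, k', h1, h2, h3⟩
  · subst h2; subst h3
    have hm : m = m' := by
      cases m with
      | none => cases m' with
        | none => rfl
        | some k' => simp [cls] at hcls
      | some k => cases m' with
        | none => simp [cls] at hcls
        | some k' => rw [Rg_some_inj ha hb]
    subst hm
    refine ⟨rfl, fun c c' hc hc' => ?_⟩
    rw [lam_half (Rg_sub m ha) hc hc']
  · cases m with
    | none => exact (Rg_none_eo ha h1).elim
    | some k1 =>
    cases m' with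
    | none => exact (Rg_none_eo hb h2).elim
    | some k2 =>
    obtain rfl := Rg_some_eo ha h1
    obtain rfl := Rg_some_eo hb h2
    obtain ⟨a1, a2, a3⟩ := H j k1
    obtain ⟨b1, b2, b3⟩ := H j' k2
    have he : T.σ j '' side k1 = T.σ j' '' side k2 := (image_side_iff T).1 h3
    rw [← he] at b1 b2 b3
    generalize r (T.σ j '' side k1) = i at *
    generalize q (T.σ j '' side k1) = k at *
    have ea : A j k1 a ∈ side k := a1 ▸ mem_image_of_mem _ h1.1
    have eb : A j' k2 b ∈ side k := b1 ▸ mem_image_of_mem _ h2.1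
    have hAA : A j k1 a = A j' k2 b := by
      apply T.inj_edge i _ (side_mem_E0 k)
      · refine ⟨ea, fun hV => ?_⟩
        have := (mem_TV_iff T (j := i) (mem_side.1 ea).1).2 hV
        rw [a2 a h1.1, mem_TV_iff T (mem_side.1 h1.1).1] at this
        exact h1.2 this
      · refine ⟨eb, fun hV => ?_⟩
        have := (mem_TV_iff T (j := i) (mem_side.1 eb).1).2 hV
        rw [b2 b h2.1, mem_TV_iff T (mem_side.1 h2.1).1] at this
        exact h2.2 this
      · rw [a2 a h1.1, b2 b h2.1, hab]
    refine ⟨?_, ?_⟩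
    · show τ j k1 _ = τ j' k2 _
      rw [a3 a h1.1, b3 b h2.1, hAA]
    · intro c c' hc hc'
      have corner : ∀ (B : E2 →ᵃ[ℝ] E2) (k0 : Fin 3) (x : E2) (d : Fin 3), B '' side k0 = side k →
          x ∈ side k0 → 1 / 2 < lam d x →
          crn d ∈ side k0 ∧ ∃ d', B (crn d) = crn d' ∧ 1 / 2 < lam d' (B x) := by
        intro B k0 x d hB hx hd
        have hx0 := (mem_side.1 hx).2
        have hdk : d ≠ k0 := by rintro rfl; rw [hx0] at hd; linarith
        have hBs := affine_side hB
        have hx' := hx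
        rw [side_eq, segment_eq_image_lineMap] at hx'
        obtain ⟨t, ⟨ht0, ht1⟩, rfl⟩ := hx'
        rw [AffineMap.apply_lineMap, lam_crn, lam_crn, AffineMap.lineMap_apply] at hd
        refine ⟨mem_side.2 ⟨crn_mem_Dtri d, by rw [lam_crn, if_neg (Ne.symm hdk)]⟩, ?_⟩
        rw [B.apply_lineMap]
        have hd' : d = k0 + 1 ∨ d = k0 + 2 := by
          fin_cases d <;> fin_cases k0 <;> simp at hdk ⊢
        have e12 : k0 + 1 ≠ k0 + 2 := by fin_cases k0 <;> simp
        have e12' : k + 1 ≠ k + 2 := by fin_cases k <;> simp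
        rcases hd' with rfl | rfl <;> rcases hBs with ⟨g1, g2⟩ | ⟨g1, g2⟩ <;>
          refine ⟨_, by first | exact g1 | exact g2, ?_⟩ <;>
          rw [AffineMap.apply_lineMap, g1, g2, lam_crn, lam_crn, AffineMap.lineMap_apply] <;>
          simp [e12, e12.symm, e12', e12'.symm] at hd ⊢ <;> linarith
      obtain ⟨ca, da, fa, ga⟩ := corner _ _ _ _ a1 h1.1 hc
      obtain ⟨cb, db, fb, gb⟩ := corner _ _ _ _ b1 h2.1 hc'
      show τ j k1 _ = τ j' k2 _
      rw [a3 _ ca, b3 _ cb, fa, fb]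
      rw [hAA] at ga
      rw [lam_half (mem_side.1 eb).1 ga gb]

lemma TV_closed [T2Space S] (T : Triangulation S n) : IsClosed (TV T) := by
  have : (V0 : Set E2).Finite := by simp [V0]
  exact (finite_iUnion fun i => this.image _).isClosed

open Filter Topology in
lemma loc_conn [T2Space S] (T : Triangulation S n) (y : S) {Y : Set S} (hY : Y ∈ 𝓝 y) :
    ∃ W ∈ 𝓝 y, W ⊆ Y ∧ IsPreconnected W := by
  have hε : ∀ p : {p : Fin n × E2 // p.2 ∈ Dtri ∧ T.σ p.1 p.2 = y}, ∃ ε > 0,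
      ∀ b ∈ Metric.ball p.1.2 ε ∩ Dtri, T.σ p.1.1 b ∈ Y := by
    rintro ⟨⟨j, b⟩, hb, hy⟩
    have h1 := T.continuousOn j b hb
    have h2 : ∀ᶠ b' in 𝓝[Dtri] b, T.σ j b' ∈ Y := h1 (by simpa only [hy] using hY)
    obtain ⟨ε, h0, hε⟩ := Metric.mem_nhdsWithin_iff.1 h2
    exact ⟨ε, h0, fun b' hb' => hε hb'⟩
  choose ε h0 hε using hε
  refine ⟨⋃ p, T.σ p.1.1 '' (Metric.ball p.1.2 (ε p) ∩ Dtri), ?_, ?_, ?_⟩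
  · refine Filter.eventually_mem_set.1 (loc_rep T y (fun x => x ∈ ⋃ p :
      {p : Fin n × E2 // p.2 ∈ Dtri ∧ T.σ p.1 p.2 = y},
      T.σ p.1.1 '' (Metric.ball p.1.2 (ε p) ∩ Dtri)) ?_)
    intro j b hb hy
    filter_upwards [inter_mem_nhdsWithin Dtri (Metric.ball_mem_nhds b (h0 ⟨(j, b), hb, hy⟩))]
      with b' hb'
    exact mem_iUnion.2 ⟨⟨(j, b), hb, hy⟩, mem_image_of_mem _ ⟨hb'.2, hb'.1⟩⟩
  · apply iUnion_subset
    rintro p _ ⟨b, hb, rfl⟩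
    exact hε p b hb
  · refine isPreconnected_iUnion ⟨y, mem_iInter.2 ?_⟩ ?_
    · rintro ⟨⟨j, b⟩, hb, hy⟩
      exact ⟨b, ⟨Metric.mem_ball_self (h0 _), hb⟩, hy⟩
    · rintro p
      apply IsPreconnected.image
      · exact ((convex_ball _ _).inter (convex_convexHull ℝ _)).isPreconnected
      · exact (T.continuousOn _).mono inter_subset_right

open Filter Topology in
lemma proper_aux [T2Space S] [CompactSpace S] (T : Triangulation S n) (F : ℝ → S → S)
    (hFcont : ContinuousOn (fun p : ℝ × S => F p.1 p.2) (Icc (0:ℝ) 1 ×ˢ (TV T)ᶜ))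
    (hFbij : ∀ t ∈ Icc (0:ℝ) 1, Set.BijOn (F t) (TV T)ᶜ (TV T)ᶜ)
    (hFinv : ∀ t ∈ Icc (0:ℝ) 1, ∃ G : S → S, ContinuousOn G (TV T)ᶜ ∧
      (∀ x ∈ (TV T)ᶜ, G (F t x) = x) ∧ (∀ x ∈ (TV T)ᶜ, F t (G x) = x))
    (K : Set S) (hK : IsCompact K) (hKV : K ⊆ (TV T)ᶜ) (v : S) (hv : v ∈ TV T) :
    ∀ᶠ x in 𝓝 v, x ∈ (TV T)ᶜ → ∀ t ∈ Icc (0:ℝ) 1, F t x ∉ K := by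
  by_contra hcon
  rw [Filter.not_eventually] at hcon
  have hVo : IsOpen (TV T)ᶜ := (TV_closed T).isOpen_compl
  let P : Set (ℝ × S) := {p | p.1 ∈ Icc (0:ℝ) 1 ∧ p.2 ∈ (TV T)ᶜ ∧ F p.1 p.2 ∈ K}
  have hne : NeBot (comap Prod.snd (𝓝 v) ⊓ 𝓟 P) := by
    rw [← frequently_mem_iff_neBot, frequently_comap]
    refine hcon.mono fun x hx => ?_
    push Not at hx
    obtain ⟨h1, t, ht, h2⟩ := hx
    exact ⟨(t, x), rfl, ht, h1, h2⟩
  obtain ⟨U, hU⟩ := Ultrafilter.exists_le (comap (Prod.snd : ℝ × S → S) (𝓝 v) ⊓ 𝓟 P)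
  have hP : ∀ᶠ p in (U : Filter (ℝ × S)), p ∈ P := hU (mem_inf_of_right (mem_principal_self P))
  have hsnd : Tendsto Prod.snd (U : Filter (ℝ × S)) (𝓝 v) :=
    tendsto_comap.mono_left (hU.trans inf_le_left)
  obtain ⟨t0, ht0, htt⟩ := isCompact_Icc.ultrafilter_le_nhds (U.map Prod.fst)
    (le_principal_iff.2 (hP.mono fun p hp => hp.1) : _ ≤ 𝓟 (Icc (0:ℝ) 1))
  obtain ⟨y, hy, hyy⟩ := hK.ultrafilter_le_nhds (U.map fun p => F p.1 p.2)
    (le_principal_iff.2 (hP.mono fun p hp => hp.2.2))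
  have htt' : Tendsto Prod.fst (U : Filter (ℝ × S)) (𝓝 t0) := htt
  have hyy' : Tendsto (fun p => F p.1 p.2) (U : Filter (ℝ × S)) (𝓝 y) := hyy
  obtain ⟨x0, hx0, hx0y⟩ := (hFbij t0 ht0).surjOn (hKV hy)
  obtain ⟨N, hN, hNc, hNV⟩ := exists_mem_nhds_isClosed_subset (hVo.mem_nhds hx0)
  have hfr : ∀ z ∈ frontier N, z ∈ (TV T)ᶜ := fun z hz => hNV (hNc.frontier_subset hz)
  have tube : ∀ᶠ p : ℝ × S in 𝓝 (t0, y), ∀ z ∈ frontier N, p.1 ∈ Icc (0:ℝ) 1 → F p.1 z ≠ p.2 := by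
    apply (isClosed_frontier.isCompact).eventually_forall_of_forall_eventually
      (P := fun (p : ℝ × S) z => p.1 ∈ Icc (0:ℝ) 1 → F p.1 z ≠ p.2)
    intro z hz
    have hzne : F t0 z ≠ y := by
      intro h
      have := (hFbij t0 ht0).injOn (hfr z hz) hx0 (h.trans hx0y.symm)
      subst this
      exact hz.2 (mem_interior_iff_mem_nhds.2 hN)
    obtain ⟨A, B, hA, hB, hzA, hyB, hAB⟩ := t2_separation hzne
    have c1 : ∀ᶠ q : ℝ × S in 𝓝 (t0, z), q ∈ Icc (0:ℝ) 1 ×ˢ (TV T)ᶜ → F q.1 q.2 ∈ A :=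
      eventually_nhdsWithin_iff.1 (hFcont (t0, z) ⟨ht0, hfr z hz⟩ (hA.mem_nhds hzA))
    have c2 : Tendsto (fun q : (ℝ × S) × S => (q.1.1, q.2)) (𝓝 ((t0, y), z)) (𝓝 (t0, z)) :=
      Continuous.tendsto (by fun_prop) ((t0, y), z)
    have c3 : Tendsto (fun q : (ℝ × S) × S => q.1.2) (𝓝 ((t0, y), z)) (𝓝 y) :=
      Continuous.tendsto (by fun_prop) ((t0, y), z)
    have c4 : Tendsto (fun q : (ℝ × S) × S => q.2) (𝓝 ((t0, y), z)) (𝓝 z) :=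
      Continuous.tendsto (by fun_prop) ((t0, y), z)
    filter_upwards [c2.eventually c1, c3.eventually (hB.mem_nhds hyB),
      c4.eventually (hVo.mem_nhds (hfr z hz))] with q h1 h2 h3 h4 h5
    have := h1 ⟨h4, h3⟩
    rw [h5] at this
    exact disjoint_left.1 hAB this h2
  rw [nhds_prod_eq] at tube
  obtain ⟨pa, hpa, pb, hpb, hab⟩ := eventually_prod_iff.1 tube
  obtain ⟨W, hW, hWs, hWc⟩ := loc_conn T y (inter_mem hpb (hVo.mem_nhds (hKV hy)))
  have e1 : ∀ᶠ p in (U : Filter (ℝ × S)), F p.1 x0 ∈ W := by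
    have : ContinuousWithinAt (fun t => F t x0) (Icc 0 1) t0 :=
      ContinuousWithinAt.comp (t := Icc (0:ℝ) 1 ×ˢ (TV T)ᶜ) (g := fun p : ℝ × S => F p.1 p.2)
        (f := fun t => (t, x0)) (hFcont (t0, x0) ⟨ht0, hx0⟩)
        (by fun_prop) (fun t ht => ⟨ht, hx0⟩)
    have h2 : Tendsto Prod.fst (U : Filter (ℝ × S)) (𝓝[Icc 0 1] t0) :=
      tendsto_nhdsWithin_iff.2 ⟨htt', hP.mono fun p hp => hp.1⟩
    exact (this.tendsto.comp h2).eventually (by rw [hx0y]; exact hW)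
  have hvN : v ∉ N := fun h => hNV h hv
  obtain ⟨⟨t, x⟩, a1, a2, a3, a4, a5⟩ := (hP.and (e1.and ((htt'.eventually hpa).and
    ((hyy'.eventually hW).and (hsnd.eventually (hNc.isOpen_compl.mem_nhds hvN)))))).exists
  obtain ⟨ht, hxV, -⟩ := a1
  dsimp only at *
  obtain ⟨G, hG, hG1, hG2⟩ := hFinv t ht
  have hGW : IsPreconnected (G '' W) := hWc.image _ (hG.mono fun w hw => (hWs hw).2)
  have m1 : x0 ∈ G '' W := ⟨_, a2, hG1 x0 hx0⟩
  have m2 : x ∈ G '' W := ⟨_, a4, hG1 x hxV⟩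
  obtain ⟨z, -, hz1, hz2⟩ := hGW (interior N) Nᶜ isOpen_interior hNc.isOpen_compl (by
      rintro _ ⟨w, hw, rfl⟩
      by_contra hz
      rw [mem_union, not_or, mem_compl_iff, not_not] at hz
      exact hab a3 (hWs hw).1 (G w) ⟨subset_closure hz.2, hz.1⟩ ht (hG2 w (hWs hw).2))
    ⟨x0, m1, mem_interior_iff_mem_nhds.2 hN⟩ ⟨x, m2, a5⟩
  exact hz2 (interior_subset hz1)

/-- Chosen triangle containing a point. -/
def ri (T : Triangulation S n) (x : S) : Fin n := (exists_rep T x).choose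

/-- Chosen representative of a point. -/
def ra (T : Triangulation S n) (x : S) : E2 := (exists_rep T x).choose_spec.choose

lemma ra_mem (T : Triangulation S n) (x : S) : ra T x ∈ Dtri :=
  (exists_rep T x).choose_spec.choose_spec.1

lemma ra_eq (T : Triangulation S n) (x : S) : T.σ (ri T x) (ra T x) = x :=
  (exists_rep T x).choose_spec.choose_spec.2

open Classical in
/-- Chosen region. -/
def rm (T : Triangulation S n) (u : Fin n ⊕ Set S) (x : S) : Option (Fin 3) :=
  if h : ∃ m, cls T (ri T x) m = u ∧ ra T x ∈ Rg m then h.choose else none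

lemma rm_spec (T : Triangulation S n) {u : Fin n ⊕ Set S} {x : S} (h : x ∈ Wc T u) :
    cls T (ri T x) (rm T u x) = u ∧ ra T x ∈ Rg (rm T u x) := by
  have h' : ∃ m, cls T (ri T x) m = u ∧ ra T x ∈ Rg m :=
    Wc_rep T (ra_mem T x) (by rw [ra_eq]; exact h)
  unfold rm
  rw [dif_pos h']
  exact h'.choose_spec

lemma cls_uniq (T : Triangulation S n) {j : Fin n} {m m' : Option (Fin 3)} {a : E2}
    (h : cls T j m = cls T j m') (ha : a ∈ Rg m) (ha' : a ∈ Rg m') : m = m' := by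
  cases m with
  | none => cases m' with
    | none => rfl
    | some k' => simp [cls] at h
  | some k => cases m' with
    | none => simp [cls] at h
    | some k' => rw [Rg_some_inj ha ha']

def TauProp (T : Triangulation S n) (l : Set S → ℝ)
    (τ : Fin n → Option (Fin 3) → (E2 ≃ᵢ E2)) : Prop :=
  ∀ j m j' m' a b, cls T j m = cls T j' m' →
      a ∈ Rg m → b ∈ Rg m' → T.σ j a = T.σ j' b →
      τ j m (fr T l j a) = τ j' m' (fr T l j' b) ∧
      ∀ c c', 1 / 2 < lam c a → 1 / 2 < lam c' b →
        τ j m (fr T l j (crn c)) = τ j' m' (fr T l j' (crn c'))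

def phi (T : Triangulation S n) (l : Set S → ℝ) (τ : Fin n → Option (Fin 3) → (E2 ≃ᵢ E2))
    (u : Fin n ⊕ Set S) (x : S) : E2 := τ (ri T x) (rm T u x) (fr T l (ri T x) (ra T x))

/-- The frame changes. -/
def hh (T : Triangulation S n) (τ : Fin n → Option (Fin 3) → (E2 ≃ᵢ E2))
    (u : Fin n ⊕ Set S) (x : S) : E2 ≃ᵢ E2 := (τ (ri T x) (rm T u x))⁻¹

open Filter Topology in
lemma Wc_open [T2Space S] (T : Triangulation S n) (u : Fin n ⊕ Set S) : IsOpen (Wc T u) := by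
  rw [isOpen_iff_mem_nhds]
  intro x hx
  refine Filter.eventually_mem_set.1 (loc_rep T x (fun x => x ∈ Wc T u) ?_)
  rintro j b hb rfl
  obtain ⟨m, hm, hbm⟩ := Wc_rep T hb hx
  filter_upwards [Rg_open hbm] with b' hb'
  exact ⟨j, m, b', hb', hm, rfl⟩

lemma phi_eq {T : Triangulation S n} {l : Set S → ℝ} {τ : Fin n → Option (Fin 3) → (E2 ≃ᵢ E2)}
    (hτ : TauProp T l τ) {u : Fin n ⊕ Set S} {j : Fin n} {m : Option (Fin 3)} {b : E2}
    (hu : cls T j m = u) (hb : b ∈ Rg m) : phi T l τ u (T.σ j b) = τ j m (fr T l j b) := by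
  have := rm_spec T (show T.σ j b ∈ Wc T u from ⟨j, m, b, hb, hu, rfl⟩)
  exact (hτ _ _ _ _ _ _ (this.1.trans hu.symm) this.2 hb (ra_eq T _)).1

/-- A chart centered at a point. -/
def Good (T : Triangulation S n) (u : Fin n ⊕ Set S) (x : S) : Prop :=
  x ∈ Wc T u ∧ ∀ j m, cls T j m = u → ∃ b ∈ Rg m, T.σ j b = x

lemma exists_good (T : Triangulation S n) {x : S} (hx : x ∉ TV T) : ∃ u, Good T u x := by
  obtain ⟨i, a, ha, rfl⟩ := exists_rep T x
  rw [mem_TV_iff T ha] at hx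
  rcases Dtri_cases ha with h | h | ⟨k, h⟩
  · exact absurd h hx
  · have hR : a ∈ Rg none := mem_Do.1 h
    refine ⟨Sum.inl i, ⟨i, none, a, hR, rfl, rfl⟩, ?_⟩
    intro j m hjm
    cases m with
    | none =>
      obtain rfl := Sum.inl_injective hjm
      exact ⟨a, hR, rfl⟩
    | some k => simp [cls] at hjm
  · refine ⟨Sum.inr (T.σ i '' side k), ⟨i, some k, a, eo_Rg h, rfl, rfl⟩, ?_⟩
    intro j m hjm
    cases m with
    | none => simp [cls] at hjm
    | some k' =>
      have h2 := (image_side_iff T).2 (Sum.inr_injective hjm)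
      have : T.σ i a ∈ T.σ j '' eo (side k') := h2 ▸ mem_image_of_mem _ h
      obtain ⟨b, hb, hba⟩ := this
      exact ⟨b, eo_Rg hb, hba⟩

open Filter Topology in
lemma hh_loc [T2Space S] (T : Triangulation S n) (τ : Fin n → Option (Fin 3) → (E2 ≃ᵢ E2))
    {u v : Fin n ⊕ Set S} {x : S} (hu : x ∈ Wc T u) (hv : x ∈ Wc T v) :
    ∀ᶠ y in 𝓝 x, (hh T τ u y)⁻¹ * hh T τ v y = (hh T τ u x)⁻¹ * hh T τ v x := by
  by_cases huv : u = v
  · subst huv; simp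
  obtain ⟨u1, u2⟩ := rm_spec T hu
  obtain ⟨v1, v2⟩ := rm_spec T hv
  have hDo : ra T x ∈ Do := by
    rcases Dtri_cases (ra_mem T x) with h | h | ⟨k, h⟩
    · exact absurd h (Rg_notV u2)
    · exact h
    · exfalso
      apply huv
      rw [← u1, ← v1]
      have aux : ∀ m, ra T x ∈ Rg m → m = some k := by
        intro m hm
        cases m with
        | none => exact (Rg_none_eo hm h).elim
        | some k' => rw [Rg_some_eo hm h]
      rw [aux _ u2, aux _ v2]
  have : ∀ᶠ y in 𝓝 x, ri T y = ri T x ∧ rm T u y = rm T u x ∧ rm T v y = rm T v x := by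
    refine loc_rep T x (fun y => ri T y = ri T x ∧ rm T u y = rm T u x ∧ rm T v y = rm T v x) ?_
    intro j b hb hbx
    rcases key_rep T (ra_mem T x) hb ((ra_eq T x).trans hbx.symm) (Rg_notV u2) with
      ⟨-, h2, h3⟩ | ⟨k, k', h2, -⟩
    swap
    · exact absurd (mem_Do.1 hDo k) (by rw [(mem_eo.1 h2).1]; exact lt_irrefl _)
    have o1 : ∀ᶠ b' in 𝓝[Dtri] b, b' ∈ Do :=
      eventually_nhdsWithin_of_eventually_nhds (isOpen_interior.mem_nhds (h3 ▸ hDo))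
    filter_upwards [o1, Rg_open (h3 ▸ u2), Rg_open (h3 ▸ v2), self_mem_nhdsWithin]
      with b' w1 w2 w3 w4
    have e1 := ra_eq T (T.σ j b')
    rcases key_rep T w4 (ra_mem T (T.σ j b')) e1.symm (Rg_notV w2) with
      ⟨-, g2, g3⟩ | ⟨k, k', g2, -⟩
    swap
    · exact absurd (mem_Do.1 w1 k) (by rw [(mem_eo.1 g2).1]; exact lt_irrefl _)
    have main : ∀ w, cls T (ri T x) (rm T w x) = w → b' ∈ Rg (rm T w x) →
        rm T w (T.σ j b') = rm T w x := by
      intro w h5 h6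
      have hW : T.σ j b' ∈ Wc T w := ⟨j, _, b', h6, h2 ▸ h5, rfl⟩
      obtain ⟨s1, s2⟩ := rm_spec T hW
      rw [← g2] at s1
      rw [← g3] at s2
      refine cls_uniq T (s1.trans ?_) s2 h6
      rw [← h2, h5]
    exact ⟨by rw [← g2, h2], main u u1 w2, main v v1 w3⟩
  filter_upwards [this] with y hy
  unfold hh
  rw [hy.1, hy.2.1, hy.2.2]

lemma dTri_nonneg (T : Triangulation S n) (l : Set S → ℝ) (i : Fin n) (x y : S) :
    0 ≤ dTri T l i x y := by
  apply Real.sInf_nonneg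
  rintro r ⟨a, -, b, -, -, -, rfl⟩
  rw [dD_eq]; exact dist_nonneg

lemma chainSums_nonneg (T : Triangulation S n) (l : Set S → ℝ) (x y : S) :
    ∀ r ∈ chainSums T l x y, 0 ≤ r := by
  rintro r ⟨k, c, idx, -, -, -, rfl⟩
  exact Finset.sum_nonneg fun j _ => dTri_nonneg _ _ _ _ _

/-- Upper bound of the glued distance inside one triangle. -/
lemma dGlue_le (T : Triangulation S n) (l : Set S → ℝ) (i : Fin n) {a b : E2} (ha : a ∈ Dtri)
    (hb : b ∈ Dtri) : dGlue T l (T.σ i a) (T.σ i b) ≤ dist (fr T l i a) (fr T l i b) := by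
  have h1 : dTri T l i (T.σ i a) (T.σ i b) ≤ dist (fr T l i a) (fr T l i b) := by
    apply csInf_le
    · refine ⟨0, ?_⟩
      rintro r ⟨a, -, b, -, -, -, rfl⟩
      rw [dD_eq]; exact dist_nonneg
    · exact ⟨a, ha, b, hb, rfl, rfl, (dD_eq _ _ _).symm⟩
  refine le_trans (csInf_le ⟨0, chainSums_nonneg T l _ _⟩ ?_) h1
  refine ⟨1, fun j => if j = 0 then T.σ i a else T.σ i b, fun _ => i, by simp, by simp, ?_, ?_⟩
  · intro j hj
    obtain rfl : j = 0 := by omega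
    simp only [if_true]
    exact ⟨mem_image_of_mem _ ha, mem_image_of_mem _ hb⟩
  · simp

open Filter Topology in
/-- Charts are locally 1-Lipschitz for the glued distance. -/
lemma lower_bound [T2Space S] {T : Triangulation S n} {l : Set S → ℝ} (hl : TriIneqT T l)
    {τ : Fin n → Option (Fin 3) → (E2 ≃ᵢ E2)} (hτ : TauProp T l τ) {u : Fin n ⊕ Set S} {x0 : S}
    (hg : Good T u x0) : ∃ O ∈ 𝓝 x0, ∀ y ∈ O, ∀ y' ∈ O, y ∈ Wc T u ∧
      dist (phi T l τ u y) (phi T l τ u y') ≤ dGlue T l y y' := by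
  have hr : ∀ p : Fin n × Option (Fin 3), ∀ᶠ r in 𝓝[>] (0:ℝ), cls T p.1 p.2 = u →
      ∀ b ∈ Dtri, b ∉ Rg p.2 → 2 * r ≤ dist (τ p.1 p.2 (fr T l p.1 b)) (phi T l τ u x0) := by
    rintro ⟨j, m⟩
    by_cases hc : cls T j m = u
    swap
    · simp [hc]
    obtain ⟨b0, hb0, hb0x⟩ := hg.2 j m hc
    obtain ⟨K, hK, hKf⟩ := LinearMap.exists_antilipschitzWith (fr T l j)
      (LinearMap.ker_eq_bot.2 (rl_inj (triIneq_res hl j)))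
    obtain ⟨ε, h0, hε⟩ := Metric.mem_nhdsWithin_iff.1 (Rg_open hb0)
    have hK' : (0:ℝ) < K := hK
    have hpos : 0 < ε / K / 2 := by positivity
    filter_upwards [Ioo_mem_nhdsGT hpos] with r hr _ b hb hbR
    dsimp only at *
    rw [← hb0x, phi_eq hτ hc hb0, (τ j m).dist_eq]
    have h1 : ε ≤ dist b b0 := by
      by_contra hlt
      push Not at hlt
      exact hbR (hε ⟨hlt, hb⟩)
    have h2 := hKf.le_mul_dist b b0
    have h3 : ε / K ≤ dist (fr T l j b) (fr T l j b0) := by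
      rw [div_le_iff₀ hK']; nlinarith
    linarith [hr.2]
  obtain ⟨r, hr, hr0⟩ := ((eventually_all.2 hr).and self_mem_nhdsWithin).exists
  have hr0 : 0 < r := hr0
  have hO : ∀ᶠ y in 𝓝 x0, y ∈ Wc T u ∧ dist (phi T l τ u y) (phi T l τ u x0) < r / 2 ∧
      ∃ j, y ∈ T.σ j '' Dtri ∧ x0 ∈ T.σ j '' Dtri := by
    refine loc_rep T x0 (fun y => y ∈ Wc T u ∧ dist (phi T l τ u y) (phi T l τ u x0) < r / 2 ∧
      ∃ j, y ∈ T.σ j '' Dtri ∧ x0 ∈ T.σ j '' Dtri) ?_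
    rintro j b hb rfl
    obtain ⟨m, hm, hbm⟩ := Wc_rep T hb hg.1
    have hc : Continuous fun b' => dist (τ j m (fr T l j b')) (τ j m (fr T l j b)) :=
      ((τ j m).continuous.comp (fr T l j).continuous_of_finiteDimensional).dist continuous_const
    have h1 : ∀ᶠ b' in 𝓝 b, dist (τ j m (fr T l j b')) (τ j m (fr T l j b)) < r / 2 :=
      hc.continuousAt.eventually_lt continuousAt_const (by simpa using hr0)
    filter_upwards [Rg_open hbm, eventually_nhdsWithin_of_eventually_nhds h1,
      self_mem_nhdsWithin] with b' w1 w2 w3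
    refine ⟨⟨j, m, b', w1, hm, rfl⟩, ?_, j, mem_image_of_mem _ w3, mem_image_of_mem _ hb⟩
    rw [phi_eq hτ hm w1, phi_eq hτ hm hbm]
    exact w2
  refine ⟨_, hO, ?_⟩
  rintro y ⟨hy1, hy2, j1, hj1, hj1'⟩ y' ⟨hy1', hy2', j2, hj2, hj2'⟩
  refine ⟨hy1, ?_⟩
  classical
  let ψ : S → ℝ := fun z => if z ∈ Wc T u then min (dist (phi T l τ u z) (phi T l τ u y)) r else r
  have hψr : ∀ z, ψ z ≤ r := by
    intro z
    dsimp only [ψ]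
    split_ifs
    · exact min_le_right _ _
    · exact le_rfl
  have step1 : ∀ j, ∀ a ∈ Dtri, ∀ b ∈ Dtri,
      ψ (T.σ j b) ≤ ψ (T.σ j a) + dist (fr T l j a) (fr T l j b) := by
    intro j a ha b hb
    have hd := dist_nonneg (x := fr T l j a) (y := fr T l j b)
    by_cases haW : T.σ j a ∈ Wc T u
    swap
    · have : ψ (T.σ j a) = r := if_neg haW
      rw [this]; linarith [hψr (T.σ j b)]
    obtain ⟨m, hm, ham⟩ := Wc_rep T ha haW
    have ea : ψ (T.σ j a) = min (dist (τ j m (fr T l j a)) (phi T l τ u y)) r := by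
      dsimp only [ψ]
      rw [if_pos haW, phi_eq hτ hm ham]
    have hiso := (τ j m).dist_eq (fr T l j a) (fr T l j b)
    have ht := dist_triangle (τ j m (fr T l j b)) (τ j m (fr T l j a)) (phi T l τ u y)
    rw [dist_comm (τ j m (fr T l j b)) (τ j m (fr T l j a)), hiso] at ht
    by_cases hbm : b ∈ Rg m
    · have eb : ψ (T.σ j b) = min (dist (τ j m (fr T l j b)) (phi T l τ u y)) r := by
        dsimp only [ψ]
        rw [if_pos ⟨j, m, b, hbm, hm, rfl⟩, phi_eq hτ hm hbm]
      rw [ea, eb]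
      rcases min_cases (dist (τ j m (fr T l j a)) (phi T l τ u y)) r with ⟨h, -⟩ | ⟨h, -⟩ <;> rw [h]
      · linarith [min_le_left (dist (τ j m (fr T l j b)) (phi T l τ u y)) r]
      · linarith [min_le_right (dist (τ j m (fr T l j b)) (phi T l τ u y)) r]
    · have h1 := hr (j, m) hm b hb hbm
      dsimp only at h1
      have h2 := dist_triangle (τ j m (fr T l j b)) (phi T l τ u y) (phi T l τ u x0)
      rw [ea]
      have h3 := hψr (T.σ j b)
      rcases min_cases (dist (τ j m (fr T l j a)) (phi T l τ u y)) r with ⟨h, -⟩ | ⟨h, -⟩ <;> rw [h]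
        <;> linarith
  have step2 : ∀ j, ∀ x ∈ T.σ j '' Dtri, ∀ x' ∈ T.σ j '' Dtri,
      ψ x' ≤ ψ x + dTri T l j x x' := by
    rintro j x ⟨a, ha, hax⟩ x' ⟨b, hb, hbx⟩
    have : ψ x' - ψ x ≤ dTri T l j x x' := by
      apply le_csInf
      · exact ⟨_, a, ha, b, hb, hax, hbx, rfl⟩
      · rintro d ⟨a, ha, b, hb, rfl, rfl, rfl⟩
        rw [dD_eq]
        have := step1 j a ha b hb
        unfold fr at this
        linarith
    linarith
  have ey : ψ y = 0 := by
    dsimp only [ψ]; rw [if_pos hy1, dist_self, min_eq_left hr0.le]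
  have ey' : ψ y' = dist (phi T l τ u y) (phi T l τ u y') := by
    dsimp only [ψ]; rw [if_pos hy1', dist_comm, min_eq_left]
    linarith [dist_triangle_right (phi T l τ u y) (phi T l τ u y') (phi T l τ u x0)]
  rw [← ey']
  apply le_csInf
  · refine ⟨_, 2, fun i => if i = 0 then y else if i = 1 then x0 else y',
      fun i => if i = 0 then j1 else j2, by simp, by simp, ?_, rfl⟩
    intro i hi
    interval_cases i
    · simp only [if_true]; exact ⟨hj1, by simpa using hj1'⟩
    · exact ⟨by simpa using hj2', by simpa using hj2⟩
  · rintro d ⟨k, c, idx, hc0, hck, hc, rfl⟩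
    have : ∀ i ≤ k, ψ (c i) ≤ ∑ j ∈ Finset.range i, dTri T l (idx j) (c j) (c (j + 1)) := by
      intro i
      induction i with
      | zero => intro _; simp [hc0, ey]
      | succ i ih =>
        intro hi
        rw [Finset.sum_range_succ]
        have h1 := ih (by omega)
        have h2 := step2 _ _ (hc i (by omega)).1 _ (hc i (by omega)).2
        linarith
    have h := this k le_rfl
    rwa [hck] at h

/-- The parameter space of the lift. -/
abbrev XX : Type := (Ioo (0:ℝ) 1) × (Icc (0:ℝ) 1)

lemma XX_contractible : ContractibleSpace XX := by
  have i1 : ContractibleSpace (Ioo (0:ℝ) 1) :=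
    (convex_Ioo 0 1).contractibleSpace ⟨1/2, by norm_num, by norm_num⟩
  have i2 : ContractibleSpace (Icc (0:ℝ) 1) :=
    (convex_Icc 0 1).contractibleSpace ⟨1/2, by norm_num, by norm_num⟩
  infer_instance

lemma XX_lpc : LocallyPathConnectedSpace XX := by
  have i1 : LocallyPathConnectedSpace (Ioo (0:ℝ) 1) := (convex_Ioo 0 1).locallyPathConnectedSpace
  have i2 : LocallyPathConnectedSpace (Icc (0:ℝ) 1) := (convex_Icc 0 1).locallyPathConnectedSpace
  infer_instance

open Filter Topology in
lemma exists_lift [T2Space S] (T : Triangulation S n) (τ : Fin n → Option (Fin 3) → (E2 ≃ᵢ E2))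
    (H : XX → S) (hH : Continuous H) (hV : ∀ x, H x ∉ TV T) :
    ∃ k : XX → (E2 ≃ᵢ E2), ∀ u x, H x ∈ Wc T u →
      ∀ᶠ y in 𝓝 x, k y * hh T τ u (H y) = k x * hh T τ u (H x) := by
  have := XX_contractible
  have := XX_lpc
  obtain ⟨k, hk⟩ := cech_aux (fun u => H ⁻¹' Wc T u) (fun u => (Wc_open T u).preimage hH)
    (fun x => by obtain ⟨u, hu⟩ := exists_good T (hV x); exact ⟨u, hu.1⟩)
    (fun u x => hh T τ u (H x))
    (fun u v x hu hv => hH.continuousAt.eventually (hh_loc T τ hu hv))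
  exact ⟨k, fun u x hx => hk u x hx⟩

/-- The developing map. -/
def Dev (T : Triangulation S n) (l : Set S → ℝ) (H : XX → S) (k : XX → (E2 ≃ᵢ E2)) (x : XX) : E2 :=
  k x (fr T l (ri T (H x)) (ra T (H x)))

lemma Dev_eq (T : Triangulation S n) (l : Set S → ℝ) (H : XX → S) (k : XX → (E2 ≃ᵢ E2))
    (τ : Fin n → Option (Fin 3) → (E2 ≃ᵢ E2)) (u : Fin n ⊕ Set S) (x : XX) :
    Dev T l H k x = (k x * hh T τ u (H x)) (phi T l τ u (H x)) := by
  unfold Dev hh phi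
  rw [IsometryEquiv.mul_apply, IsometryEquiv.inv_apply_self]

open Filter Topology in
lemma loc_lip (D : Ioo (0:ℝ) 1 → E2) (L : ℝ)
    (h : ∀ s, ∀ᶠ s' in 𝓝 s, dist (D s) (D s') ≤ L * |(s:ℝ) - s'|) (a b : Ioo (0:ℝ) 1)
    (hab : (a:ℝ) ≤ b) : dist (D a) (D b) ≤ L * (b - a) := by
  classical
  let D' : ℝ → E2 := fun s => if hs : s ∈ Ioo (0:ℝ) 1 then D ⟨s, hs⟩ else 0
  have hD' : ∀ s : Ioo (0:ℝ) 1, D' s = D s := fun s => dif_pos s.2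
  have h' : ∀ s ∈ Ioo (0:ℝ) 1, ∀ᶠ s' in 𝓝 s, dist (D' s) (D' s') ≤ L * |s - s'| := by
    intro s hs
    have := isOpen_Ioo.isOpenEmbedding_subtypeVal.map_nhds_eq (⟨s, hs⟩ : Ioo (0:ℝ) 1)
    dsimp only at this
    rw [← this, eventually_map]
    filter_upwards [h ⟨s, hs⟩] with s' hs'
    rw [hD' s', show D' s = D ⟨s, hs⟩ from hD' ⟨s, hs⟩]
    exact hs'
  have hcont : ∀ s ∈ Ioo (0:ℝ) 1, ContinuousAt D' s := by
    intro s hs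
    rw [ContinuousAt, tendsto_iff_dist_tendsto_zero]
    refine squeeze_zero' (g := fun s' => L * |s - s'|) (Eventually.of_forall fun _ => dist_nonneg)
      ?_ ?_
    · filter_upwards [h' s hs] with s' hs'
      rw [dist_comm]; exact hs'
    · have : Continuous fun s' => L * |s - s'| := by fun_prop
      simpa using this.tendsto s
  have hsub : ∀ t ∈ Icc (a:ℝ) b, t ∈ Ioo (0:ℝ) 1 := fun t ht =>
    ⟨a.2.1.trans_le ht.1, ht.2.trans_lt b.2.2⟩
  have hcl : IsClosed ({t | dist (D' a) (D' t) ≤ L * (t - a)} ∩ Icc (a:ℝ) b) := by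
    have := (isClosed_Icc (a := (a:ℝ)) (b := b)).isClosed_le
      (f := fun t => dist (D' a) (D' t)) (g := fun t => L * (t - a))
      (fun t ht => (Filter.Tendsto.dist tendsto_const_nhds
        (hcont t (hsub t ht))).mono_left nhdsWithin_le_nhds) (by fun_prop)
    convert this using 1
    ext t; simp [and_comm]
  have key := hcl.Icc_subset_of_forall_exists_gt (by simp) (by
    rintro t ⟨ht, ht'⟩ y hy
    have htI := hsub t ⟨ht'.1, ht'.2.le⟩
    have e1 := (h' t htI).filter_mono (nhdsWithin_le_nhds (s := Ioi t))
    obtain ⟨t', h1, h2⟩ := (e1.and (Ioc_mem_nhdsGT hy)).exists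
    refine ⟨t', ?_, h2⟩
    rw [abs_sub_comm, abs_of_pos (sub_pos.2 h2.1)] at h1
    have ht : dist (D' a) (D' t) ≤ L * (t - a) := ht
    have := dist_triangle (D' a) (D' t) (D' t')
    show dist (D' a) (D' t') ≤ L * (t' - a)
    linarith)
  have : dist (D' a) (D' b) ≤ L * (b - a) := key ⟨hab, le_rfl⟩
  rwa [hD', hD'] at this

open Classical in
/-- The nearby corner of the chosen representative. -/
def cc (T : Triangulation S n) (x : S) : Fin 3 :=
  if h : ∃ c, 1 / 2 < lam c (ra T x) then h.choose else 0

lemma cc_spec (T : Triangulation S n) {x : S} (h : ∃ c, 1 / 2 < lam c (ra T x)) :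
    1 / 2 < lam (cc T x) (ra T x) := by
  unfold cc
  rw [dif_pos h]
  exact h.choose_spec

/-- Points near the vertices. -/
def Nr (T : Triangulation S n) (l : Set S → ℝ) (ε : ℝ) (x : S) : Prop :=
  ∀ j, ∀ b ∈ Dtri, T.σ j b = x → ∃ c, 1 / 2 < lam c b ∧ dist (fr T l j b) (fr T l j (crn c)) < ε

lemma Nr_cc {T : Triangulation S n} {l : Set S → ℝ} {ε : ℝ} {x : S} (h : Nr T l ε x) :
    1 / 2 < lam (cc T x) (ra T x) ∧
      dist (fr T l (ri T x) (ra T x)) (fr T l (ri T x) (crn (cc T x))) < ε := by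
  obtain ⟨c, h1, h2⟩ := h _ _ (ra_mem T x) (ra_eq T x)
  have h3 := cc_spec T ⟨c, h1⟩
  refine ⟨h3, ?_⟩
  rw [lam_half (ra_mem T x) h3 h1]
  exact h2

open Filter Topology in
lemma wv_loc [T2Space S] {T : Triangulation S n} {l : Set S → ℝ}
    {τ : Fin n → Option (Fin 3) → (E2 ≃ᵢ E2)} (hτ : TauProp T l τ) {u : Fin n ⊕ Set S} {ε : ℝ}
    {x0 : S} (hu : x0 ∈ Wc T u) (hN : Nr T l ε x0) :
    ∀ᶠ x in 𝓝 x0, Nr T l ε x → τ (ri T x) (rm T u x) (fr T l (ri T x) (crn (cc T x))) =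
      τ (ri T x0) (rm T u x0) (fr T l (ri T x0) (crn (cc T x0))) := by
  refine loc_rep T x0 (fun x => Nr T l ε x → τ (ri T x) (rm T u x)
    (fr T l (ri T x) (crn (cc T x))) =
      τ (ri T x0) (rm T u x0) (fr T l (ri T x0) (crn (cc T x0)))) ?_
  intro j b hb hbx
  obtain ⟨m, hm, hbm⟩ := Wc_rep T hb (hbx ▸ hu)
  obtain ⟨c0, hc0, -⟩ := hN j b hb hbx
  have main : ∀ b' ∈ Rg m, 1 / 2 < lam c0 b' → Nr T l ε (T.σ j b') →
      τ (ri T (T.σ j b')) (rm T u (T.σ j b')) (fr T l (ri T (T.σ j b')) (crn (cc T (T.σ j b')))) =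
      τ j m (fr T l j (crn c0)) := by
    intro b' h1 h2 h3
    obtain ⟨s1, s2⟩ := rm_spec T (show T.σ j b' ∈ Wc T u from ⟨j, m, b', h1, hm, rfl⟩)
    exact (hτ _ _ j m _ b' (s1.trans hm.symm) s2 h1 (ra_eq T _)).2 _ _ (Nr_cc h3).1 h2
  have h1 : ∀ᶠ b' in 𝓝 b, 1 / 2 < lam c0 b' :=
    (lam_cont c0).continuousAt.eventually_const_lt hc0
  filter_upwards [Rg_open hbm, eventually_nhdsWithin_of_eventually_nhds h1] with b' w1 w2 w3
  rw [main b' w1 w2 w3, ← main b hbm hc0 (hbx ▸ hN), hbx]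

open Filter Topology in
lemma end_close [T2Space S] {T : Triangulation S n} {l : Set S → ℝ}
    {τ : Fin n → Option (Fin 3) → (E2 ≃ᵢ E2)} (hτ : TauProp T l τ)
    (H : XX → S) (hH : Continuous H) (hV : ∀ x, H x ∉ TV T) (k : XX → (E2 ≃ᵢ E2))
    (hk : ∀ u x, H x ∈ Wc T u →
      ∀ᶠ y in 𝓝 x, k y * hh T τ u (H y) = k x * hh T τ u (H x)) (ε : ℝ) (s : Ioo (0:ℝ) 1)
    (hN : ∀ t, Nr T l ε (H (s, t))) (t t' : Icc (0:ℝ) 1) :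
    dist (Dev T l H k (s, t)) (Dev T l H k (s, t')) ≤ 2 * ε := by
  let vp : Icc (0:ℝ) 1 → E2 := fun t =>
    k (s, t) (fr T l (ri T (H (s, t))) (crn (cc T (H (s, t)))))
  have hvp : ∀ u t, vp t = (k (s, t) * hh T τ u (H (s, t))) (τ (ri T (H (s, t)))
      (rm T u (H (s, t))) (fr T l (ri T (H (s, t))) (crn (cc T (H (s, t)))))) := by
    intro u t
    unfold vp hh
    rw [IsometryEquiv.mul_apply, IsometryEquiv.inv_apply_self]
  have hlc : IsLocallyConstant vp := by
    rw [IsLocallyConstant.iff_eventually_eq]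
    intro t
    obtain ⟨u, hu⟩ := exists_good T (hV (s, t))
    have hc : Continuous fun t' : Icc (0:ℝ) 1 => ((s, t') : XX) := by fun_prop
    filter_upwards [hc.continuousAt.eventually (hk u (s, t) hu.1),
      (hH.comp hc).continuousAt.eventually (wv_loc hτ hu.1 (hN t))] with t' h1 h2
    have h2 := h2 (hN t')
    rw [hvp u t', hvp u t, h1]
    congr 1
  have hd : ∀ t, dist (Dev T l H k (s, t)) (vp t) < ε := by
    intro t
    unfold vp Dev
    rw [(k (s, t)).dist_eq]
    exact (Nr_cc (hN t)).2
  have := hd t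
  have h2 := hd t'
  rw [hlc.apply_eq_of_preconnectedSpace t' t] at h2
  linarith [dist_triangle_right (Dev T l H k (s, t)) (Dev T l H k (s, t')) (vp t)]

open Filter Topology in
lemma near_end [T2Space S] [CompactSpace S] (T : Triangulation S n) (l : Set S → ℝ)
    (F : ℝ → S → S)
    (hFcont : ContinuousOn (fun p : ℝ × S => F p.1 p.2) (Icc (0:ℝ) 1 ×ˢ (TV T)ᶜ))
    (hFbij : ∀ t ∈ Icc (0:ℝ) 1, Set.BijOn (F t) (TV T)ᶜ (TV T)ᶜ)
    (hFinv : ∀ t ∈ Icc (0:ℝ) 1, ∃ G : S → S, ContinuousOn G (TV T)ᶜ ∧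
      (∀ x ∈ (TV T)ᶜ, G (F t x) = x) ∧ (∀ x ∈ (TV T)ᶜ, F t (G x) = x))
    (ε : ℝ) (hε : 0 < ε) (v : S) (hv : v ∈ TV T) :
    ∀ᶠ x in 𝓝 v, x ∈ (TV T)ᶜ → ∀ t ∈ Icc (0:ℝ) 1, Nr T l ε (F t x) := by
  let C : Fin n → Set E2 := fun j => {b | ∀ c, ¬ (1 / 2 < lam c b ∧
    dist (fr T l j b) (fr T l j (crn c)) < ε)}
  have hC : ∀ j, IsClosed (C j) := by
    intro j
    have : C j = ⋂ c, ({b | 1 / 2 < lam c b} ∩ {b | dist (fr T l j b) (fr T l j (crn c)) < ε})ᶜ := by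
      ext b; simp [C]
    rw [this]
    refine isClosed_iInter fun c => (IsOpen.inter ?_ ?_).isClosed_compl
    · exact isOpen_lt continuous_const (lam_cont c)
    · exact isOpen_lt ((fr T l j).continuous_of_finiteDimensional.dist continuous_const)
        continuous_const
  let K : Set S := ⋃ j, T.σ j '' (Dtri ∩ C j)
  have hK : IsCompact K := isCompact_iUnion fun j =>
    (isCompact_Dtri.inter_right (hC j)).image_of_continuousOn
      ((T.continuousOn j).mono inter_subset_left)
  have hKV : K ⊆ (TV T)ᶜ := by
    intro x hx hxV
    obtain ⟨j, b, ⟨hb, hbC⟩, rfl⟩ := mem_iUnion.1 hx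
    rw [mem_TV_iff T hb] at hxV
    obtain ⟨c, rfl⟩ := mem_V0.1 hxV
    apply hbC c
    rw [lam_crn, dist_self]
    norm_num
    exact hε
  filter_upwards [proper_aux T F hFcont hFbij hFinv K hK hKV v hv] with x hx hxV t ht
  intro j b hb hbx
  by_contra hcon
  push Not at hcon
  apply hx hxV t ht
  rw [← hbx]
  refine mem_iUnion.2 ⟨j, b, ⟨hb, fun c hc => ?_⟩, rfl⟩
  exact absurd hc.2 (not_lt.2 (hcon c hc.1))

open Filter Topology in
lemma main_le [T2Space S] [CompactSpace S] (T : Triangulation S n) (l l' : Set S → ℝ)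
    (hl : TriIneqT T l) (hl' : TriIneqT T l') (f : S → S)
    (F : ℝ → S → S)
    (hFcont : ContinuousOn (fun p : ℝ × S => F p.1 p.2) (Icc (0:ℝ) 1 ×ˢ (TV T)ᶜ))
    (hFbij : ∀ t ∈ Icc (0:ℝ) 1, Set.BijOn (F t) (TV T)ᶜ (TV T)ᶜ)
    (hFinv : ∀ t ∈ Icc (0:ℝ) 1, ∃ G : S → S, ContinuousOn G (TV T)ᶜ ∧
      (∀ x ∈ (TV T)ᶜ, G (F t x) = x) ∧ (∀ x ∈ (TV T)ᶜ, F t (G x) = x))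
    (hF0 : ∀ x ∈ (TV T)ᶜ, F 0 x = f x) (hF1 : ∀ x ∈ (TV T)ᶜ, F 1 x = x)
    (hpull : ∀ x y : S, dGlue T l' x y = dGlue T l (f x) (f y)) (i : Fin n) (k : Fin 3) :
    l (T.σ i '' side k) ≤ l' (T.σ i '' side k) := by
  obtain ⟨τ, hτ⟩ := exists_tau T l hl
  have hτ : TauProp T l τ := hτ
  let q : ℝ → E2 := fun s => AffineMap.lineMap (crn (k+1)) (crn (k+2)) s
  have hqc : Continuous q := by unfold q; exact AffineMap.lineMap_continuous
  have hqs : ∀ s ∈ Icc (0:ℝ) 1, q s ∈ side k := by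
    intro s hs
    rw [side_eq, segment_eq_image_lineMap]
    exact mem_image_of_mem _ hs
  have e12 : k + 1 ≠ k + 2 := by fin_cases k <;> simp
  have hqe : ∀ s ∈ Ioo (0:ℝ) 1, q s ∈ eo (side k) := by
    intro s hs
    refine ⟨hqs s ⟨hs.1.le, hs.2.le⟩, fun hV => ?_⟩
    obtain ⟨c, hc⟩ := mem_V0.1 hV
    have h1 : lam (k+1) (q s) = 1 - s := by
      unfold q
      rw [AffineMap.apply_lineMap, lam_crn, lam_crn, AffineMap.lineMap_apply]
      simp [e12]; ring
    rw [hc, lam_crn] at h1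
    obtain ⟨a1, a2⟩ := hs
    split_ifs at h1 <;> linarith
  have hqd : ∀ (L : Set S → ℝ), TriIneqT T L → ∀ s s', dist (fr T L i (q s)) (fr T L i (q s')) =
      L (T.σ i '' side k) * |s - s'| := by
    intro L hL s s'
    have e1 : ∀ s, fr T L i (q s) =
        AffineMap.lineMap (fr T L i (crn (k+1))) (fr T L i (crn (k+2))) s := fun s =>
      (fr T L i).toAffineMap.apply_lineMap _ _ _
    rw [e1, e1, dist_lineMap_lineMap, Real.dist_eq, mul_comm]
    congr 1
    exact rl_side (triIneq_res hL i) k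
  let γ : ℝ → S := fun s => T.σ i (q s)
  have hγV : ∀ s ∈ Ioo (0:ℝ) 1, γ s ∈ (TV T)ᶜ := by
    intro s hs h
    exact (hqe s hs).2 ((mem_TV_iff T (eo_sub_Dtri k (hqe s hs))).1 h)
  have hγc : ContinuousOn γ (Icc 0 1) :=
    (T.continuousOn i).comp hqc.continuousOn fun s hs => (mem_side.1 (hqs s hs)).1
  let H : XX → S := fun x => F x.2 (γ x.1)
  have hHV : ∀ x, H x ∉ TV T := fun x => (hFbij x.2 x.2.2).mapsTo (hγV x.1 x.1.2)
  have hHc : Continuous H := by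
    have hg : Continuous fun x : XX => γ x.1 := by
      refine hγc.comp_continuous (f := fun x : XX => (x.1 : ℝ)) (by fun_prop) ?_
      intro x
      exact ⟨x.1.2.1.le, x.1.2.2.le⟩
    exact hFcont.comp_continuous (f := fun x : XX => ((x.2 : ℝ), γ x.1))
      ((continuous_subtype_val.comp continuous_snd).prodMk hg)
      (fun x => ⟨x.2.2, hγV x.1 x.1.2⟩)
  obtain ⟨kk, hkk⟩ := exists_lift T τ H hHc hHV
  let t0 : Icc (0:ℝ) 1 := ⟨0, by norm_num, by norm_num⟩
  let t1 : Icc (0:ℝ) 1 := ⟨1, by norm_num, by norm_num⟩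
  have hH1 : ∀ s, H (s, t1) = γ s := fun s => hF1 _ (hγV s s.2)
  have hH0 : ∀ s, H (s, t0) = f (γ s) := fun s => hF0 _ (hγV s s.2)
  have hs_c : ∀ t, Continuous fun s : Ioo (0:ℝ) 1 => ((s, t) : XX) := fun t => by fun_prop
  have one : ∀ s s' : Ioo (0:ℝ) 1, dist (Dev T l H kk (s, t1)) (Dev T l H kk (s', t1)) =
      l (T.σ i '' side k) * |(s:ℝ) - s'| := by
    let u : Fin n ⊕ Set S := cls T i (some k)
    have hW : ∀ s : Ioo (0:ℝ) 1, H (s, t1) ∈ Wc T u := by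
      intro s
      rw [hH1]
      exact ⟨i, some k, q s, eo_Rg (hqe s s.2), rfl, rfl⟩
    have hlc : IsLocallyConstant fun s : Ioo (0:ℝ) 1 => kk (s, t1) * hh T τ u (H (s, t1)) := by
      rw [IsLocallyConstant.iff_eventually_eq]
      intro s
      exact (hs_c t1).continuousAt.eventually (hkk u (s, t1) (hW s))
    have hcI : PreconnectedSpace (Ioo (0:ℝ) 1) :=
      isPreconnected_iff_preconnectedSpace.1 isPreconnected_Ioo
    intro s s'
    have hph : ∀ s : Ioo (0:ℝ) 1, phi T l τ u (H (s, t1)) = τ i (some k) (fr T l i (q s)) := by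
      intro s
      rw [hH1]
      exact phi_eq hτ rfl (eo_Rg (hqe s s.2))
    rw [Dev_eq T l H kk τ u, Dev_eq T l H kk τ u, hlc.apply_eq_of_preconnectedSpace s s',
      IsometryEquiv.dist_eq, hph, hph, IsometryEquiv.dist_eq, hqd l hl]
  have zero : ∀ s s' : Ioo (0:ℝ) 1, (s:ℝ) ≤ s' →
      dist (Dev T l H kk (s, t0)) (Dev T l H kk (s', t0)) ≤
      l' (T.σ i '' side k) * (s' - s) := by
    intro s s' hss
    refine loc_lip (fun s => Dev T l H kk (s, t0)) _ ?_ s s' hss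
    intro s
    obtain ⟨u, hu⟩ := exists_good T (hHV (s, t0))
    obtain ⟨O, hO, hO'⟩ := lower_bound hl hτ hu
    have hc := (hHc.comp (hs_c t0)).continuousAt (x := s)
    filter_upwards [(hs_c t0).continuousAt.eventually (hkk u (s, t0) hu.1), hc.eventually hO]
      with s' h1 h2
    rw [Dev_eq T l H kk τ u, Dev_eq T l H kk τ u, h1, IsometryEquiv.dist_eq]
    refine (hO' _ (mem_of_mem_nhds hO) _ h2).2.trans ?_
    show dGlue T l (H (s, t0)) (H (s', t0)) ≤ _
    rw [hH0, hH0, ← hpull, ← hqd l' hl']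
    exact dGlue_le T l' i (eo_sub_Dtri k (hqe s s.2)) (eo_sub_Dtri k (hqe s' s'.2))
  have ends : ∀ ε > 0, ∀ s0 : ℝ, s0 ∈ Icc (0:ℝ) 1 → γ s0 ∈ TV T →
      ∀ᶠ s in 𝓝[Icc 0 1] s0, ∀ hs : s ∈ Ioo (0:ℝ) 1,
        dist (Dev T l H kk (⟨s, hs⟩, t0)) (Dev T l H kk (⟨s, hs⟩, t1)) ≤ 2 * ε := by
    intro ε hε s0 hs0 hs0V
    have h1 := near_end T l F hFcont hFbij hFinv ε hε (γ s0) hs0V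
    filter_upwards [(hγc s0 hs0).eventually h1] with s h2 hs
    refine end_close hτ H hHc hHV kk hkk ε ⟨s, hs⟩ ?_ t0 t1
    intro t
    exact h2 (hγV s hs) t t.2
  by_contra hlt
  push Not at hlt
  set A := l (T.σ i '' side k)
  set B := l' (T.σ i '' side k)
  have hε : 0 < (A - B) / 16 := by linarith
  have hv0 : γ 0 ∈ TV T := by
    have : γ 0 = T.σ i (crn (k+1)) := by simp [γ, q]
    rw [this]
    exact (mem_TV_iff T (crn_mem_Dtri _)).2 (mem_V0.2 ⟨_, rfl⟩)
  have hv1 : γ 1 ∈ TV T := by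
    have : γ 1 = T.σ i (crn (k+2)) := by simp [γ, q]
    rw [this]
    exact (mem_TV_iff T (crn_mem_Dtri _)).2 (mem_V0.2 ⟨_, rfl⟩)
  have E0 := ends _ hε 0 (by norm_num) hv0
  have E1 := ends _ hε 1 (by norm_num) hv1
  have F0 : 𝓝[Ioo 0 1] (0:ℝ) ≤ 𝓝[Icc 0 1] 0 := nhdsWithin_mono _ Ioo_subset_Icc_self
  have F1 : 𝓝[Ioo 0 1] (1:ℝ) ≤ 𝓝[Icc 0 1] 1 := nhdsWithin_mono _ Ioo_subset_Icc_self
  have N0 : NeBot (𝓝[Ioo 0 1] (0:ℝ)) := left_nhdsWithin_Ioo_neBot (by norm_num)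
  have N1 : NeBot (𝓝[Ioo 0 1] (1:ℝ)) := right_nhdsWithin_Ioo_neBot (by norm_num)
  have L0 : ∀ᶠ s in 𝓝[Ioo 0 1] (0:ℝ), s < 1 / 4 :=
    eventually_nhdsWithin_of_eventually_nhds (eventually_lt_nhds (by norm_num))
  have L1 : ∀ᶠ s in 𝓝[Ioo 0 1] (1:ℝ), 3 / 4 < s :=
    eventually_nhdsWithin_of_eventually_nhds (eventually_gt_nhds (by norm_num))
  obtain ⟨s, ⟨hs1, hs2⟩, hs⟩ := (((E0.filter_mono F0).and L0).and self_mem_nhdsWithin).exists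
  obtain ⟨s', ⟨hs1', hs2'⟩, hs'⟩ := (((E1.filter_mono F1).and L1).and self_mem_nhdsWithin).exists
  have d1 := hs1 hs
  have d2 := hs1' hs'
  have d3 := one ⟨s, hs⟩ ⟨s', hs'⟩
  have d4 := zero ⟨s, hs⟩ ⟨s', hs'⟩ (by show s ≤ s'; linarith)
  dsimp only at d3 d4
  rw [abs_sub_comm, abs_of_nonneg (by linarith)] at d3
  have d5 := dist_triangle4 (Dev T l H kk (⟨s, hs⟩, t1)) (Dev T l H kk (⟨s, hs⟩, t0))
    (Dev T l H kk (⟨s', hs'⟩, t0)) (Dev T l H kk (⟨s', hs'⟩, t1))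
  rw [dist_comm (Dev T l H kk (⟨s, hs⟩, t1)) (Dev T l H kk (⟨s, hs⟩, t0))] at d5
  nlinarith

/-- Proposition 5.4: if `l, l' ∈ ℝ^{E(T)}_Δ` and there is a homeomorphism
`f : S → S` fixing the vertex set `V = ⋃ᵢ σᵢ(V₀)` setwise, whose restriction to `S ∖ V` is
isotopic to the identity of `S ∖ V`, and which pulls `d_T[l]` back to `d_T[l']`, then
`l = l'` on the edges of `T`; i.e. `l ↦ [d_T[l]]` is injective into the Teichmüller space
of polyhedral metrics on `(S, V)`. -/
theorem edge_lengths_injective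
    {S : Type} [TopologicalSpace S] [CompactSpace S] [T2Space S] [ConnectedSpace S]
    {n : ℕ} (T : Triangulation S n) (l l' : Set S → ℝ)
    (hl : TriIneqT T l) (hl' : TriIneqT T l')
    (V : Set S) (hV : V = ⋃ i, T.σ i '' V0)
    (f : S ≃ₜ S) (hfV : f '' V = V)
    (F : ℝ → S → S)
    (hFcont : ContinuousOn (fun p : ℝ × S => F p.1 p.2) (Icc (0:ℝ) 1 ×ˢ Vᶜ))
    (hFbij : ∀ t ∈ Icc (0:ℝ) 1, Set.BijOn (F t) Vᶜ Vᶜ)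
    (hFinv : ∀ t ∈ Icc (0:ℝ) 1, ∃ G : S → S, ContinuousOn G Vᶜ ∧
      (∀ x ∈ Vᶜ, G (F t x) = x) ∧ (∀ x ∈ Vᶜ, F t (G x) = x))
    (hF0 : ∀ x ∈ Vᶜ, F 0 x = f x) (hF1 : ∀ x ∈ Vᶜ, F 1 x = x)
    (hpull : ∀ x y : S, dGlue T l' x y = dGlue T l (f x) (f y)) :
    ∀ i : Fin n, ∀ e ∈ E0, l (T.σ i '' e) = l' (T.σ i '' e) := by
  intro i e he
  rw [E0_eq] at he
  obtain ⟨k, rfl⟩ := he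
  have hVT : V = TV T := hV
  subst hVT
  refine le_antisymm (main_le T l l' hl hl' f F hFcont hFbij hFinv hF0 hF1 hpull i k) ?_
  have hfc : f '' (TV T)ᶜ = (TV T)ᶜ := by rw [image_compl_eq f.bijective, hfV]
  have bij1 : BijOn f (TV T)ᶜ (TV T)ᶜ := by
    refine ⟨fun x hx => ?_, f.injective.injOn, hfc.symm.subset⟩
    rw [← hfc]; exact mem_image_of_mem _ hx
  have bij2 : BijOn f.symm (TV T)ᶜ (TV T)ᶜ := by
    refine bij1.symm ⟨fun x _ => ?_, fun x _ => ?_⟩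
    · exact f.apply_symm_apply x
    · exact f.symm_apply_apply x
  have h1t : ∀ t ∈ Icc (0:ℝ) 1, 1 - t ∈ Icc (0:ℝ) 1 := fun t ht =>
    ⟨by linarith [ht.2], by linarith [ht.1]⟩
  refine main_le T l' l hl' hl f.symm (fun t x => F (1 - t) (f.symm x)) ?_ ?_ ?_ ?_ ?_ ?_ i k
  · refine hFcont.comp (f := fun p : ℝ × S => (1 - p.1, f.symm p.2)) (by fun_prop) ?_
    rintro ⟨t, x⟩ ⟨ht, hx⟩
    exact ⟨h1t t ht, bij2.mapsTo hx⟩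
  · intro t ht
    exact (hFbij _ (h1t t ht)).comp bij2
  · intro t ht
    obtain ⟨G, hG, hG1, hG2⟩ := hFinv _ (h1t t ht)
    refine ⟨fun x => f (G x), f.continuous.comp_continuousOn hG, fun x hx => ?_, fun x hx => ?_⟩
    · show f (G (F (1 - t) (f.symm x))) = x
      rw [hG1 _ (bij2.mapsTo hx), f.apply_symm_apply]
    · show F (1 - t) (f.symm (f (G x))) = x
      rw [f.symm_apply_apply, hG2 x hx]
  · intro x hx
    show F (1 - 0) (f.symm x) = _
    rw [sub_zero, hF1 _ (bij2.mapsTo hx)]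
  · intro x hx
    show F (1 - 1) (f.symm x) = _
    rw [sub_self, hF0 _ (bij2.mapsTo hx), f.apply_symm_apply]
  · intro x y
    rw [hpull, f.apply_symm_apply, f.apply_symm_apply]
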